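/- arXiv:1804.01589 — 3 statements merged into one kernel-verified Lean document; each statement's English description precedes it below -/
import Mathlib

section
/- Let F be an algebraically closed field and G an abelian group. Two finite-dimensional G-graded simple F-algebras (associative or not necessarily associative) satisfy the same G-graded polynomial identities if and only if they are isomorphic as G-graded algebras. -/
noncomputable section

variable (K : Type*) [Field K]
variable {G : Type*} [CommGroup G] [DecidableEq G]
variable {A : Type*} [NonUnitalNonAssocSemiring A] [Module K A]
  [SMulCommClass K A A] [IsScalarTower K A A]

/-- `𝒜` is a `G`-grading of the (not necessarily associative or unital) algebra `A`. -/
def IsAlgGrading (𝒜 : G → Submodule K A) : Prop :=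
  DirectSum.IsInternal 𝒜 ∧ ∀ (g h : G), ∀ a ∈ 𝒜 g, ∀ b ∈ 𝒜 h, a * b ∈ 𝒜 (g * h)

/-- A submodule is homogeneous if it is the sum of its intersections with the components. -/
def IsHomogSubmodule (𝒜 : G → Submodule K A) (I : Submodule K A) : Prop :=
  I = ⨆ g, I ⊓ 𝒜 g

/-- two-sided ideal of a nonassociative algebra -/
def IsMulIdeal (I : Submodule K A) : Prop :=
  ∀ a : A, ∀ x ∈ I, a * x ∈ I ∧ x * a ∈ I

/-- graded simple: `A·A ≠ 0` and no nontrivial homogeneous ideals. -/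
def IsGradedSimple (𝒜 : G → Submodule K A) : Prop :=
  (∃ a b : A, a * b ≠ 0) ∧
    ∀ I : Submodule K A, IsMulIdeal K I → IsHomogSubmodule K 𝒜 I → I = ⊥ ∨ I = ⊤

/-- The multiplication algebra: the subalgebra of `End_K A` generated by left and right
multiplications. -/
def MultAlg : NonUnitalSubalgebra K (Module.End K A) :=
  NonUnitalAlgebra.adjoin K
    (Set.range (LinearMap.mulLeft K (A := A)) ∪ Set.range (LinearMap.mulRight K (A := A)))

/-- The homogeneous component of degree `h` of `End_K A`: maps sending `𝒜 g` into `𝒜 (h*g)`. -/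
def endGrading (𝒜 : G → Submodule K A) (h : G) : Submodule K (Module.End K A) where
  carrier := {φ | ∀ g : G, ∀ x ∈ 𝒜 g, φ x ∈ 𝒜 (h * g)}
  add_mem' := fun hf hg g x hx => (𝒜 _).add_mem (hf g x hx) (hg g x hx)
  zero_mem' := fun g x hx => (𝒜 _).zero_mem
  smul_mem' := fun c f hf g x hx => (𝒜 _).smul_mem c (hf g x hx)

/-- The centroid of `A`: endomorphisms commuting with all left and right multiplications. -/
def centroid : Submodule K (Module.End K A) where
  carrier := {φ | ∀ a x : A, φ (a * x) = a * φ x ∧ φ (x * a) = φ x * a}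
  add_mem' := by
    intro f g hf hg a x
    refine ⟨?_, ?_⟩ <;>
      simp [LinearMap.add_apply, (hf a x).1, (hg a x).1, (hf a x).2, (hg a x).2, mul_add, add_mul]
  zero_mem' := by intro a x; simp
  smul_mem' := by
    intro c f hf a x
    refine ⟨?_, ?_⟩ <;>
      simp [LinearMap.smul_apply, (hf a x).1, (hf a x).2, mul_smul_comm, smul_mul_assoc]

/-- The graded centroid `Γ(A)`: the sums of homogeneous centroid elements. -/
def gradedCentroid (𝒜 : G → Submodule K A) : Submodule K (Module.End K A) :=
  ⨆ h : G, centroid K ⊓ endGrading K 𝒜 h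

/-- graded polynomial identity, variables indexed by `G × ℕ`, the variable `(g, i)` having
degree `g`. -/
def IsGradedPI (𝒜 : G → Submodule K A) (f : FreeNonUnitalNonAssocAlgebra K (G × ℕ)) : Prop :=
  ∀ v : G × ℕ → A, (∀ p, v p ∈ 𝒜 p.1) → FreeNonUnitalNonAssocAlgebra.lift K v f = 0

/-- ordinary polynomial identity of a not necessarily associative algebra -/
def IsPI (f : FreeNonUnitalNonAssocAlgebra K ℕ) : Prop :=
  ∀ v : ℕ → A, FreeNonUnitalNonAssocAlgebra.lift K v f = 0

/-- A subset `S` of an associative unital `K`-algebra `B` satisfies an ordinary polynomial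
identity. -/
def SatisfiesOrdinaryPI {B : Type*} [Ring B] [Algebra K B] (S : Set B) : Prop :=
  ∃ f : FreeAlgebra K ℕ, f ≠ 0 ∧
    ∀ v : ℕ → B, (∀ i, v i ∈ S) → FreeAlgebra.lift K v f = 0

/-- isomorphism of `G`-graded algebras -/
def IsGradedIso {B : Type*} [NonUnitalNonAssocSemiring B] [Module K B]
    (𝒜 : G → Submodule K A) (ℬ : G → Submodule K B) : Prop :=
  ∃ ψ : A ≃ₗ[K] B, (∀ x y : A, ψ (x * y) = ψ x * ψ y) ∧
    ∀ g : G, (𝒜 g).map (ψ : A →ₗ[K] B) = ℬ g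


theorem amalg_dom.{u, w} {R : Type u} {A B : Type w} [CommRing R] [CommRing A] [CommRing B]
    [IsDomain A] [IsDomain B] (i : R →+* A) (j : R →+* B)
    (hi : Function.Injective i) (hj : Function.Injective j) :
    ∃ (T : Type w) (_ : CommRing T) (_ : Nontrivial T) (f : A →+* T) (g : B →+* T),
      ∀ x, f (i x) = g (j x) := by
  let : Algebra R A := i.toAlgebra
  let : Algebra R B := j.toAlgebra
  have hT := Algebra.TensorProduct.nontrivial_of_algebraMap_injective_of_isDomain R A B hi hj
  refine ⟨TensorProduct R A B, inferInstance, hT,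
    (Algebra.TensorProduct.includeLeft (R := R) (S := R) (A := A) (B := B)).toRingHom,
    (Algebra.TensorProduct.includeRight (R := R) (A := A) (B := B)).toRingHom, fun x => ?_⟩
  have h1 := (Algebra.TensorProduct.includeLeft (R := R) (S := R) (A := A) (B := B)).commutes x
  have h2 := (Algebra.TensorProduct.includeRight (R := R) (A := A) (B := B)).commutes x
  exact h1.trans h2.symm

theorem amalg_prime.{u, w} {P : Type u} {O : Type w} [CommRing P] [CommRing O] (α : P →+* O)
    (p : Ideal P) (qA qB : Ideal O) [qA.IsPrime] [qB.IsPrime]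
    (hcA : qA.comap α = p) (hcB : qB.comap α = p) :
    ∃ (T : Type w) (_ : CommRing T) (_ : Nontrivial T) (f g : O →+* T),
      (∀ x ∈ qA, f x = 0) ∧ (∀ x ∈ qB, g x = 0) ∧ ∀ x, f (α x) = g (α x) := by
  obtain ⟨T, m, hm, f, g, hfg⟩ := amalg_dom (Ideal.quotientMap qA α hcA.ge)
    (Ideal.quotientMap qB α hcB.ge) (Ideal.quotientMap_injective' hcA.le)
    (Ideal.quotientMap_injective' hcB.le)
  refine ⟨_, m, hm, f.comp (Ideal.Quotient.mk qA), g.comp (Ideal.Quotient.mk qB), ?_, ?_, ?_⟩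
  · intro x hx
    simp [Ideal.Quotient.eq_zero_iff_mem.mpr hx]
  · intro x hx
    simp [Ideal.Quotient.eq_zero_iff_mem.mpr hx]
  · intro x
    exact hfg (Ideal.Quotient.mk p x)

open MvPolynomial in
theorem elim_points {F : Type*} [Field F] [IsAlgClosed F] {σ τ : Type*} [Finite σ] [Finite τ]
    (SA SB : Set (MvPolynomial (σ ⊕ τ) F))
    (h : ∀ p : MvPolynomial τ F,
      (∀ v : σ ⊕ τ → F, (∀ q ∈ SA, eval v q = 0) → eval (v ∘ Sum.inr) p = 0) ↔
      (∀ v : σ ⊕ τ → F, (∀ q ∈ SB, eval v q = 0) → eval (v ∘ Sum.inr) p = 0))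
    (hne : ∃ v : σ ⊕ τ → F, ∀ q ∈ SA, eval v q = 0) :
    ∃ vA vB : σ ⊕ τ → F, (∀ q ∈ SA, eval vA q = 0) ∧ (∀ q ∈ SB, eval vB q = 0) ∧
      vA ∘ Sum.inr = vB ∘ Sum.inr := by
  classical
  let V : Set (MvPolynomial (σ ⊕ τ) F) → Ideal (MvPolynomial (σ ⊕ τ) F) := fun S =>
    ⨅ v : {v : σ ⊕ τ → F // ∀ q ∈ S, eval v q = 0}, RingHom.ker (eval v.1)
  have hV : ∀ S p, p ∈ V S ↔ ∀ v : σ ⊕ τ → F, (∀ q ∈ S, eval v q = 0) → eval v p = 0 := by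
    intro S p
    simp [V, RingHom.mem_ker]
  let α : MvPolynomial τ F →+* MvPolynomial (σ ⊕ τ) F := (rename Sum.inr : _ →ₐ[F] _).toRingHom
  have hα : ∀ p, α p = rename Sum.inr p := fun p => rfl
  have hJ : (V SA).comap α = (V SB).comap α := by
    ext p
    simp only [Ideal.mem_comap, hV, hα, eval_rename]
    exact h p
  have hJne : (V SA).comap α ≠ ⊤ := by
    rw [Ideal.ne_top_iff_one, Ideal.mem_comap, hV]
    obtain ⟨v, hv⟩ := hne
    intro h1
    simpa using h1 v hv
  obtain ⟨p, hp⟩ := Ideal.nonempty_minimalPrimes hJne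
  obtain ⟨qA, hqA, hIA, hcA⟩ := Ideal.exists_comap_eq_of_mem_minimalPrimes α p hp
  rw [hJ] at hp
  obtain ⟨qB, hqB, hIB, hcB⟩ := Ideal.exists_comap_eq_of_mem_minimalPrimes α p hp
  obtain ⟨T, _, _, fA, fB, hfA, hfB, hfAB⟩ := amalg_prime α p qA qB hcA hcB
  let f : MvPolynomial (σ ⊕ (σ ⊕ τ)) F →+* T := eval₂Hom (fA.comp C)
    (Sum.elim (fun i => fA (X (Sum.inl i))) (Sum.elim (fun i => fB (X (Sum.inl i)))
      (fun j => fA (X (Sum.inr j)))))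
  let jA : σ ⊕ τ → σ ⊕ (σ ⊕ τ) := Sum.elim Sum.inl (fun j => Sum.inr (Sum.inr j))
  let jB : σ ⊕ τ → σ ⊕ (σ ⊕ τ) := Sum.inr
  have hA : ∀ x, f (rename jA x) = fA x := by
    intro x
    have : f.comp (rename jA : _ →ₐ[F] _).toRingHom = fA := by
      ext i
      · simp [f]
      · rcases i with i | i <;> simp [f, jA]
    exact congrArg (fun g : MvPolynomial (σ ⊕ τ) F →+* T => g x) this
  have hB : ∀ x, f (rename jB x) = fB x := by
    intro x
    have : f.comp (rename jB : _ →ₐ[F] _).toRingHom = fB := by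
      ext i
      · have := hfAB (C i)
        simp only [hα, rename_C] at this
        simp [f, this]
      · rcases i with i | i
        · simp [f, jB]
        · have := hfAB (X i)
          simp only [hα, rename_X] at this
          simp [f, jB, this]
    exact congrArg (fun g : MvPolynomial (σ ⊕ τ) F →+* T => g x) this
  have hker : RingHom.ker f ≠ ⊤ := RingHom.ker_ne_top f
  obtain ⟨m, hm, hle⟩ := Ideal.exists_le_maximal _ hker
  obtain ⟨v, hv⟩ := isMaximal_iff_eq_vanishingIdeal_singleton.mp hm
  have hz : ∀ x, f x = 0 → eval v x = 0 := by
    intro x hx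
    have : x ∈ m := hle hx
    rw [hv] at this
    simpa [mem_vanishingIdeal_singleton_iff, aeval_eq_eval] using this
  refine ⟨v ∘ jA, v ∘ jB, ?_, ?_, ?_⟩
  · intro q hq
    rw [← eval_rename]
    refine hz _ ?_
    rw [hA]
    exact hfA _ (hIA ((hV _ _).mpr fun v hv => hv q hq))
  · intro q hq
    rw [← eval_rename]
    refine hz _ ?_
    rw [hB]
    exact hfB _ (hIB ((hV _ _).mpr fun v hv => hv q hq))
  · rfl


set_option linter.unusedSectionVars false

section GradedPart

variable {F : Type*} [Field F]
variable {H : Type*} [CommGroup H] [DecidableEq H]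
variable {U : Type*} [NonUnitalNonAssocRing U] [Module F U]
  [SMulCommClass F U U] [IsScalarTower F U U]
variable {W : Type*} [NonUnitalNonAssocRing W] [Module F W]
  [SMulCommClass F W W] [IsScalarTower F W W]

theorem iSup_grading {𝒰 : H → Submodule F U} (hgr : IsAlgGrading F 𝒰) : ⨆ g, 𝒰 g = ⊤ :=
  hgr.1.submodule_iSup_eq_top

theorem grading_ind {𝒰 : H → Submodule F U} (hgr : IsAlgGrading F 𝒰) {P : U → Prop}
    (hom : ∀ g, ∀ x ∈ 𝒰 g, P x) (h0 : P 0) (hadd : ∀ x y, P x → P y → P (x + y)) (x : U) : P x := by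
  have hx : x ∈ ⨆ g, 𝒰 g := by rw [iSup_grading hgr]; trivial
  exact Submodule.iSup_induction 𝒰 (motive := P) hx hom h0 hadd

theorem ideal_eq_top {𝒰 : H → Submodule F U} (hgr : IsAlgGrading F 𝒰)
    (hs : IsGradedSimple F 𝒰) (J : Submodule F U) (hJ : IsMulIdeal F J) {g : H} {w : U}
    (hwJ : w ∈ J) (hwg : w ∈ 𝒰 g) (hw : w ≠ 0) : J = ⊤ := by
  set J' : Submodule F U := ⨆ g, J ⊓ 𝒰 g with hJ'
  have hle : J' ≤ J := iSup_le fun g => inf_le_left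
  have hwJ' : w ∈ J' := Submodule.mem_iSup_of_mem g ⟨hwJ, hwg⟩
  have hid : IsMulIdeal F J' := by
    intro a
    refine grading_ind hgr (P := fun a => ∀ x ∈ J', a * x ∈ J' ∧ x * a ∈ J') ?_ ?_ ?_ a
    · intro k a ha x hx
      refine Submodule.iSup_induction (fun g => J ⊓ 𝒰 g)
        (motive := fun x => a * x ∈ J' ∧ x * a ∈ J') hx ?_ ?_ ?_
      · rintro l x ⟨hxJ, hxl⟩
        exact ⟨Submodule.mem_iSup_of_mem (k * l) ⟨(hJ a x hxJ).1, hgr.2 _ _ _ ha _ hxl⟩,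
          Submodule.mem_iSup_of_mem (l * k) ⟨(hJ a x hxJ).2, hgr.2 _ _ _ hxl _ ha⟩⟩
      · simp
      · rintro x y ⟨h1, h2⟩ ⟨h3, h4⟩
        rw [mul_add, add_mul]
        exact ⟨J'.add_mem h1 h3, J'.add_mem h2 h4⟩
    · intro x _
      simp
    · intro a b ha hb x hx
      rw [mul_add, add_mul]
      exact ⟨J'.add_mem (ha x hx).1 (hb x hx).1, J'.add_mem (ha x hx).2 (hb x hx).2⟩
  have hhom : IsHomogSubmodule F 𝒰 J' := by
    apply le_antisymm
    · exact iSup_le fun g => le_iSup_of_le g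
        (le_inf (le_iSup (fun g => J ⊓ 𝒰 g) g) inf_le_right)
    · exact iSup_le fun g => inf_le_left
  rcases hs.2 J' hid hhom with h | h
  · rw [h] at hwJ'
    exact absurd ((Submodule.mem_bot F).mp hwJ') hw
  · rw [h] at hle
    exact top_le_iff.mp hle

theorem exists_hom_mul_ne {𝒰 : H → Submodule F U} (hgr : IsAlgGrading F 𝒰)
    (hs : IsGradedSimple F 𝒰) :
    ∃ g h, ∃ p ∈ 𝒰 g, ∃ q ∈ 𝒰 h, p * q ≠ 0 := by
  by_contra! hcon
  obtain ⟨a, b, hab⟩ := hs.1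
  apply hab
  refine grading_ind hgr (P := fun a => a * b = 0) ?_ (zero_mul _) ?_ a
  · intro g p hp
    refine grading_ind hgr (P := fun b => p * b = 0) ?_ (mul_zero _) ?_ b
    · intro h q hq
      exact hcon g h p hp q hq
    · intro x y hx hy
      rw [mul_add, hx, hy, add_zero]
  · intro x y hx hy
    rw [add_mul, hx, hy, add_zero]

theorem homog_proj {ι : Type*} [Fintype ι] {𝒰 : H → Submodule F U} (hgr : IsAlgGrading F 𝒰)
    (deg : ι → H) (x : ι → U) (hx : ∀ i, x i ∈ 𝒰 (deg i)) (c : ι → F) (γ : H)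
    (hy : ∑ i, c i • x i ∈ 𝒰 γ) :
    ∑ i, c i • x i = ∑ i with deg i = γ, c i • x i := by
  have hind := hgr.1.submodule_iSupIndep γ
  have hsplit := Finset.sum_filter_add_sum_filter_not Finset.univ (fun i => deg i = γ)
    (fun i => c i • x i)
  have h1 : ∑ i with deg i = γ, c i • x i ∈ 𝒰 γ := by
    refine Submodule.sum_mem _ fun i hi => Submodule.smul_mem _ _ ?_
    have := hx i
    rwa [(Finset.mem_filter.mp hi).2] at this
  have h2 : ∑ i with ¬ deg i = γ, c i • x i ∈ ⨆ j, ⨆ (_ : j ≠ γ), 𝒰 j := by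
    refine Submodule.sum_mem _ fun i hi => Submodule.smul_mem _ _ ?_
    exact Submodule.mem_iSup_of_mem (deg i)
      (Submodule.mem_iSup_of_mem (Finset.mem_filter.mp hi).2 (hx i))
  have h3 : ∑ i with ¬ deg i = γ, c i • x i ∈ 𝒰 γ := by
    rw [← hsplit] at hy
    exact (Submodule.add_mem_iff_right _ h1).mp hy
  have h4 := Submodule.disjoint_def.mp hind _ h3 h2
  rw [← hsplit, h4, add_zero]

theorem burnside_full {V : Type*} [IsAlgClosed F] [AddCommGroup V] [Module F V]
    [FiniteDimensional F V] [Nontrivial V]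
    (S : Subalgebra F (Module.End F V))
    (h : ∀ X : Submodule F V, (∀ T ∈ S, ∀ w ∈ X, T w ∈ X) → X = ⊥ ∨ X = ⊤)
    (φ : Module.End F V) : φ ∈ S := by
  classical
  have hsim : IsSimpleModule S V := by
    rw [isSimpleModule_iff]
    refine { exists_pair_ne := ⟨⊥, ⊤, bot_ne_top⟩, eq_bot_or_eq_top := fun X => ?_ }
    rcases h (X.restrictScalars F) (fun T hT w hw => X.smul_mem (⟨T, hT⟩ : S) hw) with h | h
    · left
      exact (Submodule.restrictScalars_eq_bot_iff _ _ _).mp h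
    · right
      exact (Submodule.restrictScalars_eq_top_iff _ _ _).mp h
  have hbij := IsSimpleModule.algebraMap_end_bijective_of_isAlgClosed (A := S) (V := V) F
  let φ' : Module.End (Module.End S V) V :=
    { toFun := φ
      map_add' := φ.map_add
      map_smul' := by
        intro e v
        obtain ⟨c, rfl⟩ := hbij.2 e
        simp }
  let bs := Module.finBasis F V
  obtain ⟨r, hr⟩ := jacobson_density (R := S) φ' (Finset.univ.image bs)
  have : φ = r.1 := by
    refine bs.ext fun i => ?_
    exact hr (bs i) (by simp)
  rw [this]
  exact r.2

/-- unital multiplication algebra -/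
def MAll (F : Type*) [Field F] (U : Type*) [NonUnitalNonAssocRing U] [Module F U]
    [SMulCommClass F U U] [IsScalarTower F U U] : Subalgebra F (Module.End F U) :=
  Algebra.adjoin F
    (Set.range (LinearMap.mulLeft F (A := U)) ∪ Set.range (LinearMap.mulRight F (A := U)))

theorem indep_eq {𝒰 : H → Submodule F U} (hgr : IsAlgGrading F 𝒰) (N : H → Submodule F U)
    (hN : ∀ g, N g ≤ 𝒰 g) (htop : ⨆ g, N g = ⊤) (g : H) : N g = 𝒰 g := by
  apply le_antisymm (hN g)
  intro y hy
  have hle : (⊤ : Submodule F U) ≤ N g ⊔ ⨆ j, ⨆ (_ : j ≠ g), 𝒰 j := by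
    rw [← htop]
    refine iSup_le fun k => ?_
    by_cases hk : k = g
    · subst hk
      exact le_sup_left
    · exact le_sup_of_le_right ((hN k).trans (le_iSup₂_of_le k hk le_rfl))
  obtain ⟨n, hn, m, hm, hnm⟩ := Submodule.mem_sup.mp (hle (Submodule.mem_top (x := y)))
  have hm' : m ∈ 𝒰 g := by
    have : m = y - n := by rw [← hnm]; abel
    rw [this]
    exact Submodule.sub_mem _ hy (hN g hn)
  have := Submodule.disjoint_def.mp (hgr.1.submodule_iSupIndep g) m hm' hm
  rw [← hnm, this, add_zero]
  exact hn

theorem mall_transitive {𝒰 : H → Submodule F U} (hgr : IsAlgGrading F 𝒰)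
    (hs : IsGradedSimple F 𝒰) {g h : H} {w y : U} (hw : w ∈ 𝒰 g) (hw0 : w ≠ 0) (hy : y ∈ 𝒰 h) :
    ∃ T ∈ MAll F U, T ∈ endGrading F 𝒰 (h * g⁻¹) ∧ T w = y := by
  let N : H → Submodule F U := fun k =>
    (Subalgebra.toSubmodule (MAll F U) ⊓ endGrading F 𝒰 (k * g⁻¹)).map
      (LinearMap.applyₗ (R := F) (M := U) (M₂ := U) w)
  have hmem : ∀ k y, y ∈ N k ↔ ∃ T ∈ MAll F U, T ∈ endGrading F 𝒰 (k * g⁻¹) ∧ T w = y := by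
    intro k y
    simp only [N, Submodule.mem_map, Submodule.mem_inf, Subalgebra.mem_toSubmodule,
      LinearMap.applyₗ_apply_apply, and_assoc]
  have hN : ∀ k, N k ≤ 𝒰 k := by
    intro k y hy
    obtain ⟨T, -, hT, rfl⟩ := (hmem k y).mp hy
    have := hT g w hw
    rwa [inv_mul_cancel_right] at this
  have hid : IsMulIdeal F (⨆ k, N k) := by
    intro a
    refine grading_ind hgr (P := fun a => ∀ x ∈ (⨆ k, N k), a * x ∈ (⨆ k, N k) ∧ x * a ∈ (⨆ k, N k))
      ?_ ?_ ?_ a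
    · intro l a ha x hx
      refine Submodule.iSup_induction N
        (motive := fun x => a * x ∈ (⨆ k, N k) ∧ x * a ∈ (⨆ k, N k)) hx ?_ ?_ ?_
      · intro k x hx
        obtain ⟨T, hT, hTg, rfl⟩ := (hmem k x).mp hx
        constructor
        · refine Submodule.mem_iSup_of_mem (l * k) ((hmem _ _).mpr
            ⟨LinearMap.mulLeft F a * T, ?_, ?_, rfl⟩)
          · exact mul_mem (Algebra.subset_adjoin (Or.inl ⟨a, rfl⟩)) hT
          · intro m z hz
            have := hgr.2 _ _ _ ha _ (hTg m z hz)
            rwa [← mul_assoc, ← mul_assoc] at this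
        · refine Submodule.mem_iSup_of_mem (l * k) ((hmem _ _).mpr
            ⟨LinearMap.mulRight F a * T, ?_, ?_, rfl⟩)
          · exact mul_mem (Algebra.subset_adjoin (Or.inr ⟨a, rfl⟩)) hT
          · intro m z hz
            have := hgr.2 _ _ _ (hTg m z hz) _ ha
            rwa [mul_comm _ l, ← mul_assoc, ← mul_assoc] at this
      · simp
      · rintro x y ⟨h1, h2⟩ ⟨h3, h4⟩
        rw [mul_add, add_mul]
        exact ⟨Submodule.add_mem _ h1 h3, Submodule.add_mem _ h2 h4⟩
    · intro x _
      simp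
    · intro a b ha hb x hx
      rw [mul_add, add_mul]
      exact ⟨Submodule.add_mem _ (ha x hx).1 (hb x hx).1,
        Submodule.add_mem _ (ha x hx).2 (hb x hx).2⟩
  have hwN : w ∈ N g := by
    refine (hmem _ _).mpr ⟨1, one_mem _, ?_, rfl⟩
    intro m z hz
    rw [mul_inv_cancel, one_mul]
    exact hz
  have htop := ideal_eq_top hgr hs _ hid (Submodule.mem_iSup_of_mem g hwN) hw hw0
  rw [← indep_eq hgr N hN htop h] at hy
  exact (hmem _ _).mp hy

theorem exists_proj [IsAlgClosed F] {𝒰 : H → Submodule F U} (hgr : IsAlgGrading F 𝒰)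
    (hs : IsGradedSimple F 𝒰) [FiniteDimensional F U]
    {ι : Type*} [DecidableEq ι] (deg : ι → H) (b : Module.Basis ι F U)
    (hb : ∀ i, b i ∈ 𝒰 (deg i)) (i : ι) :
    ∃ T ∈ MAll F U, ∀ j, deg j = deg i → T (b j) = if j = i then b i else 0 := by
  let V := 𝒰 (deg i)
  let S : Subalgebra F (Module.End F V) :=
    { carrier := {φ | ∃ T ∈ MAll F U, T ∈ endGrading F 𝒰 1 ∧ ∀ v : V, T v = φ v}
      mul_mem' := by
        rintro φ ψ ⟨T, hT, hTg, hTφ⟩ ⟨T', hT', hTg', hTψ⟩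
        refine ⟨T * T', mul_mem hT hT', ?_, ?_⟩
        · intro m z hz
          have := hTg _ _ (hTg' m z hz)
          rwa [one_mul] at this
        · intro v
          simp [hTψ, hTφ]
      add_mem' := by
        rintro φ ψ ⟨T, hT, hTg, hTφ⟩ ⟨T', hT', hTg', hTψ⟩
        exact ⟨T + T', add_mem hT hT', Submodule.add_mem _ hTg hTg', fun v => by simp [hTψ, hTφ]⟩
      algebraMap_mem' := by
        intro c
        refine ⟨algebraMap F _ c, Subalgebra.algebraMap_mem _ c, ?_, ?_⟩
        · intro m z hz
          rw [one_mul]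
          exact Submodule.smul_mem _ c hz
        · intro v
          rfl }
  have hne : Nontrivial V := ⟨⟨⟨b i, hb i⟩, 0, fun h => b.ne_zero i (congrArg Subtype.val h)⟩⟩
  let P : U →ₗ[F] U := (b.coord i).smulRight (b i)
  have hP : ∀ x, P x ∈ V := fun x => Submodule.smul_mem _ _ (hb i)
  let φ : Module.End F V := (P.codRestrict V hP).comp V.subtype
  have hφ := burnside_full S (fun X hX => ?_) φ
  · obtain ⟨T, hT, -, hTφ⟩ := hφ
    refine ⟨T, hT, fun j hj => ?_⟩
    have hbj : b j ∈ V := by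
      have := hb j
      rwa [hj] at this
    have := hTφ ⟨b j, hbj⟩
    simp only at this
    rw [this]
    by_cases hji : j = i
    · subst hji
      simp [φ, P]
    · simp [φ, P, hji]
  · by_cases hX0 : X = ⊥
    · exact Or.inl hX0
    right
    obtain ⟨w, hwX, hw0⟩ := Submodule.exists_mem_ne_zero_of_ne_bot hX0
    rw [eq_top_iff]
    intro y _
    obtain ⟨T, hT, hTg, hTy⟩ := mall_transitive hgr hs w.2 (fun h => hw0 (Subtype.ext h)) y.2
    rw [mul_inv_cancel] at hTg
    have hTV : ∀ v ∈ V, T v ∈ V := fun v hv => by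
      have := hTg _ v hv
      rwa [one_mul] at this
    have := hX (T.restrict hTV) ⟨T, hT, hTg, fun v => rfl⟩ w hwX
    have e : T.restrict hTV w = y := Subtype.ext hTy
    rwa [e] at this

section Poly

variable {ι : Type*}

/-- evaluation of polynomials in two families of variables -/
def ev (x z : ι → U) : FreeNonUnitalNonAssocAlgebra F (ι ⊕ ι) →ₙₐ[F] U :=
  FreeNonUnitalNonAssocAlgebra.lift F (Sum.elim x z)

theorem ev_inl (x z : ι → U) (i : ι) :
    ev (F := F) x z (FreeNonUnitalNonAssocAlgebra.of F (Sum.inl i)) = x i := by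
  simp [ev]

theorem ev_inr (x z : ι → U) (i : ι) :
    ev (F := F) x z (FreeNonUnitalNonAssocAlgebra.of F (Sum.inr i)) = z i := by
  simp [ev]

/-- substitution for the first family -/
def sub (y : ι → FreeNonUnitalNonAssocAlgebra F (ι ⊕ ι)) :
    FreeNonUnitalNonAssocAlgebra F (ι ⊕ ι) →ₙₐ[F] FreeNonUnitalNonAssocAlgebra F (ι ⊕ ι) :=
  FreeNonUnitalNonAssocAlgebra.lift F
    (Sum.elim y (fun i => FreeNonUnitalNonAssocAlgebra.of F (Sum.inr i)))

theorem ev_sub (y : ι → FreeNonUnitalNonAssocAlgebra F (ι ⊕ ι)) (x z : ι → U)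
    (f : FreeNonUnitalNonAssocAlgebra F (ι ⊕ ι)) :
    ev x z (sub y f) = ev (fun i => ev x z (y i)) z f := by
  have : (ev x z).comp (sub y) = ev (fun i => ev x z (y i)) z := by
    ext i
    rcases i with i | i
    · change ev x z (sub y (FreeNonUnitalNonAssocAlgebra.of F (Sum.inl i))) = ev (fun i => ev x z (y i)) z (FreeNonUnitalNonAssocAlgebra.of F (Sum.inl i))
      rw [ev_inl]; simp [sub]
    · change ev x z (sub y (FreeNonUnitalNonAssocAlgebra.of F (Sum.inr i))) = ev (fun i => ev x z (y i)) z (FreeNonUnitalNonAssocAlgebra.of F (Sum.inr i))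
      rw [ev_inr]; simp [sub, ev_inr]
  exact congrArg (fun g : FreeNonUnitalNonAssocAlgebra F (ι ⊕ ι) →ₙₐ[F] U => g f) this

variable [DecidableEq ι]

/-- linear in the first variables from `s`, independent of the others -/
def IsML (F : Type*) [Field F] (U : Type*) [NonUnitalNonAssocRing U] [Module F U]
    [SMulCommClass F U U] [IsScalarTower F U U] (s : Finset ι)
    (h : FreeNonUnitalNonAssocAlgebra F (ι ⊕ ι)) : Prop :=
  ∀ z x : ι → U, (∀ k ∈ s, ∀ (y y' : U) (c : F),
    ev (Function.update x k (y + c • y')) z h =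
      ev (Function.update x k y) z h + c • ev (Function.update x k y') z h) ∧
    (∀ k, k ∉ s → ∀ y : U, ev (Function.update x k y) z h = ev x z h)

theorem IsML.mul {s t : Finset ι} (hst : Disjoint s t)
    {h h' : FreeNonUnitalNonAssocAlgebra F (ι ⊕ ι)}
    (hh : IsML F U s h) (hh' : IsML F U t h') : IsML F U (s ∪ t) (h * h') := by
  intro z x
  constructor
  · intro k hk y y' c
    simp only [map_mul]
    rcases Finset.mem_union.mp hk with hk | hk
    · have hkt := Finset.disjoint_left.mp hst hk
      rw [(hh z x).1 k hk, (hh' z x).2 k hkt, (hh' z x).2 k hkt, (hh' z x).2 k hkt, add_mul,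
        smul_mul_assoc]
    · have hkt := Finset.disjoint_right.mp hst hk
      rw [(hh' z x).1 k hk, (hh z x).2 k hkt, (hh z x).2 k hkt, (hh z x).2 k hkt, mul_add,
        mul_smul_comm]
  · intro k hk y
    rw [Finset.mem_union, not_or] at hk
    simp only [map_mul]
    rw [(hh z x).2 k hk.1, (hh' z x).2 k hk.2]

theorem IsML.add {s : Finset ι}
    {h h' : FreeNonUnitalNonAssocAlgebra F (ι ⊕ ι)}
    (hh : IsML F U s h) (hh' : IsML F U s h') : IsML F U s (h + h') := by
  intro z x
  constructor
  · intro k hk y y' c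
    simp only [map_add]
    rw [(hh z x).1 k hk, (hh' z x).1 k hk, smul_add]
    abel
  · intro k hk y
    simp only [map_add]
    rw [(hh z x).2 k hk, (hh' z x).2 k hk]

theorem IsML.smul {s : Finset ι} (c : F)
    {h : FreeNonUnitalNonAssocAlgebra F (ι ⊕ ι)}
    (hh : IsML F U s h) : IsML F U s (c • h) := by
  intro z x
  constructor
  · intro k hk y y' c'
    simp only [map_smul]
    rw [(hh z x).1 k hk, smul_add, smul_comm]
  · intro k hk y
    simp only [map_smul]
    rw [(hh z x).2 k hk]

theorem IsML.zero {s : Finset ι} :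
    IsML F U s (0 : FreeNonUnitalNonAssocAlgebra F (ι ⊕ ι)) := by
  intro z x
  constructor <;> simp

theorem IsML.inl (i : ι) :
    IsML F U {i} (FreeNonUnitalNonAssocAlgebra.of F (Sum.inl i)) := by
  intro z x
  constructor
  · intro k hk y y' c
    rw [Finset.mem_singleton] at hk
    subst hk
    simp [ev_inl]
  · intro k hk y
    rw [Finset.mem_singleton] at hk
    simp [ev_inl, Function.update_of_ne (Ne.symm hk)]

variable [Fintype ι]

/-- constants -/
def zpoly (b : Module.Basis ι F W) (a : W) : FreeNonUnitalNonAssocAlgebra F (ι ⊕ ι) :=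
  ∑ i, b.repr a i • FreeNonUnitalNonAssocAlgebra.of F (Sum.inr i)

theorem ev_zpoly (b : Module.Basis ι F W) (a : W) (x z : ι → U) :
    ev x z (zpoly b a) = ∑ i, b.repr a i • z i := by
  simp only [zpoly, map_sum, map_smul, ev_inr]

theorem ev_zpoly_self (b : Module.Basis ι F W) (a : W) (x : ι → W) :
    ev x b (zpoly b a) = a := by
  rw [ev_zpoly, b.sum_repr]

theorem IsML.zpoly (b : Module.Basis ι F W) (a : W) : IsML F U ∅ (zpoly b a) := by
  intro z x
  constructor
  · intro k hk
    simp at hk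
  · intro k _ y
    rw [ev_zpoly, ev_zpoly]

variable (U) in
/-- representable operators -/
def RepOp (b : Module.Basis ι F W) (i : ι) (T : Module.End F W) : Prop :=
  ∃ h : FreeNonUnitalNonAssocAlgebra F (ι ⊕ ι), IsML F U {i} h ∧ IsML F W {i} h ∧
    ∀ x : ι → W, ev x b h = T (x i)

theorem rep_mall (b : Module.Basis ι F W) (i : ι) (T : Module.End F W) (hT : T ∈ MAll F W) :
    RepOp U b i T := by
  have key : ∀ S, RepOp U b i S → RepOp U b i (T * S) := by
    induction hT using Algebra.adjoin_induction with
    | mem T hT =>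
      rintro S ⟨h, h1, h2, h3⟩
      rcases hT with ⟨a, rfl⟩ | ⟨a, rfl⟩
      · refine ⟨zpoly b a * h, ?_, ?_, fun x => ?_⟩
        · simpa using (IsML.zpoly b a).mul (Finset.disjoint_empty_left _) h1
        · simpa using (IsML.zpoly b a).mul (Finset.disjoint_empty_left _) h2
        · simp [ev_zpoly_self, h3]
      · refine ⟨h * zpoly b a, ?_, ?_, fun x => ?_⟩
        · simpa using h1.mul (Finset.disjoint_empty_right _) (IsML.zpoly b a)
        · simpa using h2.mul (Finset.disjoint_empty_right _) (IsML.zpoly b a)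
        · simp [ev_zpoly_self, h3]
    | algebraMap c =>
      rintro S ⟨h, h1, h2, h3⟩
      exact ⟨c • h, h1.smul c, h2.smul c, fun x => by simp [h3]⟩
    | add T T' _ _ hT hT' =>
      intro S hS
      obtain ⟨h, h1, h2, h3⟩ := hT S hS
      obtain ⟨h', h1', h2', h3'⟩ := hT' S hS
      exact ⟨h + h', h1.add h1', h2.add h2', fun x => by simp [h3, h3', add_mul]⟩
    | mul T T' _ _ hT hT' =>
      intro S hS
      rw [mul_assoc]
      exact hT _ (hT' _ hS)
  have := key 1 ⟨FreeNonUnitalNonAssocAlgebra.of F (Sum.inl i), IsML.inl i, IsML.inl i,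
    fun x => by simp [ev_inl]⟩
  rwa [mul_one] at this

variable (U) in
/-- the ideal of values -/
def HIdeal (deg : ι → H) (b : Module.Basis ι F W) (s : Finset ι) : Submodule F W where
  carrier := {w | ∃ h : FreeNonUnitalNonAssocAlgebra F (ι ⊕ ι), IsML F U s h ∧ IsML F W s h ∧
    ∀ σ : Equiv.Perm ι, (∀ i, deg (σ i) = deg i) →
      ev (b ∘ σ) b h = if ∀ i ∈ s, σ i = i then w else 0}
  add_mem' := by
    rintro w w' ⟨h, h1, h2, h3⟩ ⟨h', h1', h2', h3'⟩
    refine ⟨h + h', h1.add h1', h2.add h2', fun σ hσ => ?_⟩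
    rw [map_add, h3 σ hσ, h3' σ hσ]
    split_ifs <;> simp
  zero_mem' := ⟨0, IsML.zero, IsML.zero, fun σ hσ => by simp⟩
  smul_mem' := by
    rintro c w ⟨h, h1, h2, h3⟩
    refine ⟨c • h, h1.smul c, h2.smul c, fun σ hσ => ?_⟩
    rw [map_smul, h3 σ hσ]
    split_ifs <;> simp

theorem hideal_mul (deg : ι → H) (b : Module.Basis ι F W) {s t : Finset ι} (hst : Disjoint s t)
    {w w' : W} (hw : w ∈ HIdeal U deg b s) (hw' : w' ∈ HIdeal U deg b t) :
    w * w' ∈ HIdeal U deg b (s ∪ t) := by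
  obtain ⟨h, h1, h2, h3⟩ := hw
  obtain ⟨h', h1', h2', h3'⟩ := hw'
  refine ⟨h * h', h1.mul hst h1', h2.mul hst h2', fun σ hσ => ?_⟩
  rw [map_mul, h3 σ hσ, h3' σ hσ]
  have : (∀ i ∈ s ∪ t, σ i = i) ↔ (∀ i ∈ s, σ i = i) ∧ (∀ i ∈ t, σ i = i) := by
    simp only [Finset.mem_union]
    constructor
    · intro h
      exact ⟨fun i hi => h i (Or.inl hi), fun i hi => h i (Or.inr hi)⟩
    · rintro ⟨ha, hb⟩ i (hi | hi)
      · exact ha i hi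
      · exact hb i hi
  by_cases c1 : ∀ i ∈ s, σ i = i
  · by_cases c2 : ∀ i ∈ t, σ i = i
    · rw [if_pos c1, if_pos c2, if_pos (this.mpr ⟨c1, c2⟩)]
    · rw [if_neg c2, if_neg (fun h => c2 (this.mp h).2), mul_zero]
  · rw [if_neg c1, if_neg (fun h => c1 (this.mp h).1), zero_mul]

theorem hideal_empty (deg : ι → H) (b : Module.Basis ι F W) (w : W) :
    w ∈ HIdeal U deg b ∅ :=
  ⟨zpoly b w, IsML.zpoly b w, IsML.zpoly b w, fun σ _ => by simp [ev_zpoly_self]⟩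

theorem hideal_isIdeal (deg : ι → H) (b : Module.Basis ι F W) (s : Finset ι) :
    IsMulIdeal F (HIdeal U deg b s) := by
  intro a x hx
  constructor
  · simpa using hideal_mul deg b (Finset.disjoint_empty_left s) (hideal_empty deg b a) hx
  · simpa using hideal_mul deg b (Finset.disjoint_empty_right s) hx (hideal_empty deg b a)

theorem hideal_top [IsAlgClosed F] [FiniteDimensional F W] {𝒲 : H → Submodule F W}
    (hgr : IsAlgGrading F 𝒲) (hs : IsGradedSimple F 𝒲)
    (deg : ι → H) (b : Module.Basis ι F W) (hb : ∀ i, b i ∈ 𝒲 (deg i)) (s : Finset ι) :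
    HIdeal U deg b s = ⊤ := by
  have hsing : ∀ i, HIdeal U deg b {i} = ⊤ := by
    intro i
    refine ideal_eq_top hgr hs _ (hideal_isIdeal deg b _) (w := b i) ?_ (hb i) (b.ne_zero i)
    obtain ⟨T, hT, hTb⟩ := exists_proj hgr hs deg b hb i
    obtain ⟨h, h1, h2, h3⟩ := rep_mall (U := U) b i T hT
    refine ⟨h, h1, h2, fun σ hσ => ?_⟩
    rw [h3]
    simp only [Function.comp_apply, Finset.mem_singleton, forall_eq]
    exact hTb _ (hσ i)
  induction s using Finset.induction_on with
  | empty => exact eq_top_iff.mpr fun w _ => hideal_empty deg b w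
  | insert i s his ih =>
    obtain ⟨g, h, p, hp, q, hq, hpq⟩ := exists_hom_mul_ne hgr hs
    refine ideal_eq_top hgr hs _ (hideal_isIdeal deg b _) (w := p * q) ?_ (hgr.2 _ _ _ hp _ hq) hpq
    rw [Finset.insert_eq]
    refine hideal_mul deg b (Finset.disjoint_singleton_left.mpr his) ?_ ?_
    · rw [hsing]; trivial
    · rw [ih]; trivial

/-- multilinear and block alternating -/
def IsAlt (F : Type*) [Field F] (U : Type*) [NonUnitalNonAssocRing U] [Module F U]
    [SMulCommClass F U U] [IsScalarTower F U U] (deg : ι → H)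
    (u : FreeNonUnitalNonAssocAlgebra F (ι ⊕ ι)) : Prop :=
  ∀ z x : ι → U, (∀ k, ∀ (y y' : U) (c : F),
    ev (Function.update x k (y + c • y')) z u =
      ev (Function.update x k y) z u + c • ev (Function.update x k y') z u) ∧
    (∀ i j, i ≠ j → deg i = deg j → x i = x j → ev x z u = 0)

/-- block alternation -/
def alternate (deg : ι → H) (h : FreeNonUnitalNonAssocAlgebra F (ι ⊕ ι)) :
    FreeNonUnitalNonAssocAlgebra F (ι ⊕ ι) :=
  ∑ σ : Equiv.Perm ι with ∀ i, deg (σ i) = deg i, ((Equiv.Perm.sign σ : ℤ) : F) •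
    sub (fun i => FreeNonUnitalNonAssocAlgebra.of F (Sum.inl (σ i))) h

theorem ev_alternate (deg : ι → H) (h : FreeNonUnitalNonAssocAlgebra F (ι ⊕ ι)) (x z : ι → U) :
    ev x z (alternate deg h) = ∑ σ : Equiv.Perm ι with ∀ i, deg (σ i) = deg i,
      ((Equiv.Perm.sign σ : ℤ) : F) • ev (x ∘ σ) z h := by
  simp only [alternate, map_sum, map_smul, ev_sub, ev_inl]
  rfl

theorem alternate_isAlt (deg : ι → H) (h : FreeNonUnitalNonAssocAlgebra F (ι ⊕ ι))
    (hh : IsML F U Finset.univ h) : IsAlt F U deg (alternate deg h) := by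
  intro z x
  constructor
  · intro k y y' c
    have hup : ∀ (σ : Equiv.Perm ι) (y : U),
        (Function.update x k y) ∘ σ = Function.update (x ∘ σ) (σ.symm k) y := by
      intro σ y
      rw [Function.update_comp_equiv]
    simp only [ev_alternate, hup]
    rw [Finset.smul_sum, ← Finset.sum_add_distrib]
    refine Finset.sum_congr rfl fun σ _ => ?_
    rw [(hh z _).1 _ (Finset.mem_univ _), smul_add, smul_comm c]
  · intro i j hij hdeg hx
    rw [ev_alternate]
    have hxs : x ∘ Equiv.swap i j = x := by
      funext k
      simp only [Function.comp_apply, Equiv.swap_apply_def]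
      split_ifs with h1 h2
      · rw [h1, hx]
      · rw [h2, hx]
      · rfl
    have hds : ∀ k, deg (Equiv.swap i j k) = deg k := by
      intro k
      simp only [Equiv.swap_apply_def]
      split_ifs with h1 h2
      · rw [h1, hdeg]
      · rw [h2, hdeg]
      · rfl
    refine Finset.sum_involution (fun σ _ => Equiv.swap i j * σ) ?_ ?_ ?_ ?_
    · intro σ _
      have : x ∘ ⇑(Equiv.swap i j * σ) = x ∘ σ := by
        rw [Equiv.Perm.coe_mul, ← Function.comp_assoc, hxs]
      rw [this, Equiv.Perm.sign_mul, Equiv.Perm.sign_swap hij]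
      simp
    · intro σ _ _ heq
      have : Equiv.swap i j = 1 := by
        simpa using heq
      exact hij (Equiv.swap_eq_one_iff.mp this)
    · intro σ hσ
      simp only [Finset.mem_filter, Finset.mem_univ, true_and] at hσ ⊢
      intro k
      rw [Equiv.Perm.mul_apply, hds, hσ]
    · intro σ _
      simp

variable (U) in
theorem exists_alt [IsAlgClosed F] [FiniteDimensional F W] {𝒲 : H → Submodule F W}
    (hgr : IsAlgGrading F 𝒲) (hs : IsGradedSimple F 𝒲)
    (deg : ι → H) (b : Module.Basis ι F W) (hb : ∀ i, b i ∈ 𝒲 (deg i)) (w : W) :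
    ∃ u : FreeNonUnitalNonAssocAlgebra F (ι ⊕ ι), IsAlt F U deg u ∧ IsAlt F W deg u ∧
      ev b b u = w := by
  have hw : w ∈ HIdeal U deg b Finset.univ := by
    rw [hideal_top hgr hs deg b hb]; trivial
  obtain ⟨h, h1, h2, h3⟩ := hw
  refine ⟨alternate deg h, alternate_isAlt deg h h1, alternate_isAlt deg h h2, ?_⟩
  rw [ev_alternate, Finset.sum_eq_single 1]
  · have := h3 1 (fun i => rfl)
    simp at this
    simp [this]
  · intro σ hσ hne
    rw [h3 σ (Finset.mem_filter.mp hσ).2, if_neg, smul_zero]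
    intro hc
    exact hne (Equiv.ext fun i => hc i (Finset.mem_univ i))
  · intro h
    simp at h

theorem IsAlt.map_sum {deg : ι → H} {u : FreeNonUnitalNonAssocAlgebra F (ι ⊕ ι)}
    (hu : IsAlt F U deg u) (x z : ι → U) (k : ι) (s : Finset ι) (c : ι → F) (y : ι → U) :
    ev (Function.update x k (∑ l ∈ s, c l • y l)) z u =
      ∑ l ∈ s, c l • ev (Function.update x k (y l)) z u := by
  have h0 : ev (Function.update x k 0) z u = 0 := by
    have := (hu z x).1 k 0 0 1
    simpa using this
  induction s using Finset.induction_on with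
  | empty => simpa using h0
  | insert i s his ih =>
    rw [Finset.sum_insert his, Finset.sum_insert his, add_comm, (hu z x).1, ih, add_comm]

theorem IsAlt.update {deg : ι → H} {u : FreeNonUnitalNonAssocAlgebra F (ι ⊕ ι)}
    (hu : IsAlt F U deg u) (x z : ι → U) (k : ι) (c : ι → F) :
    ev (Function.update x k (∑ l with deg l = deg k, c l • x l)) z u = c k • ev x z u := by
  rw [hu.map_sum, Finset.sum_eq_single k]
  · rw [Function.update_eq_self]
  · intro l hl hlk
    rw [(hu z _).2 l k hlk (Finset.mem_filter.mp hl).2, smul_zero]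
    rw [Function.update_of_ne hlk, Function.update_self]
  · intro h
    simp at h

theorem IsAlt.dep {𝒰 : H → Submodule F U} (hgr : IsAlgGrading F 𝒰) {deg : ι → H}
    {u : FreeNonUnitalNonAssocAlgebra F (ι ⊕ ι)}
    (hu : IsAlt F U deg u) (x z : ι → U) (hx : ∀ i, x i ∈ 𝒰 (deg i))
    (hdep : ¬ LinearIndependent F x) : ev x z u = 0 := by
  rw [Fintype.not_linearIndependent_iff] at hdep
  obtain ⟨c, hc, k, hk⟩ := hdep
  have h1 := homog_proj hgr deg x hx c (deg k) (by rw [hc]; exact Submodule.zero_mem _)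
  have h2 := hu.update x z k c
  have h3 := hu.map_sum x z k ∅ c x
  rw [← h1, hc] at h2
  simp only [Finset.sum_empty] at h3
  rw [h3] at h2
  exact (smul_eq_zero.mp h2.symm).resolve_left hk

end Poly

section Final

variable {ι : Type*} [Fintype ι] [DecidableEq ι]

theorem homog_coeff {𝒰 : H → Submodule F U} (hgr : IsAlgGrading F 𝒰) (deg : ι → H) {a : ι → U}
    (ha : ∀ i, a i ∈ 𝒰 (deg i)) (hli : LinearIndependent F a) (c : ι → F) (γ : H)
    (hy : ∑ i, c i • a i ∈ 𝒰 γ) (k : ι) (hk : deg k ≠ γ) : c k = 0 := by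
  have h1 := homog_proj hgr deg a ha c γ hy
  have h2 : ∑ l, (if deg l = γ then 0 else c l) • a l = 0 := by
    rw [Finset.sum_filter, ← sub_eq_zero, ← Finset.sum_sub_distrib] at h1
    rw [← h1]
    refine Finset.sum_congr rfl fun l _ => ?_
    split_ifs <;> simp
  have := Fintype.linearIndependent_iff.mp hli _ h2 k
  simpa [hk] using this

/-- homogeneous independent families with structure constants -/
def HB (𝒰 : H → Submodule F U) (deg : ι → H) (a : ι → U) (d : ι × ι × ι → F) : Prop :=
  (∀ i, a i ∈ 𝒰 (deg i)) ∧ LinearIndependent F a ∧ ∀ i j, a i * a j = ∑ k, d (i, j, k) • a k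

theorem HB.mem {𝒰 : H → Submodule F U} (hgr : IsAlgGrading F 𝒰) {deg : ι → H} {a : ι → U}
    {d : ι × ι × ι → F} (h : HB 𝒰 deg a d) (i j : ι) :
    ∑ k, d (i, j, k) • a k ∈ 𝒰 (deg i * deg j) := by
  rw [← h.2.2]
  exact hgr.2 _ _ _ (h.1 i) _ (h.1 j)

theorem HB.off {𝒰 : H → Submodule F U} (hgr : IsAlgGrading F 𝒰) {deg : ι → H} {a : ι → U}
    {d : ι × ι × ι → F} (h : HB 𝒰 deg a d) (i j k : ι) (hk : deg k ≠ deg i * deg j) :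
    d (i, j, k) = 0 :=
  homog_coeff hgr deg h.1 h.2.1 (fun k => d (i, j, k)) _ (h.mem hgr i j) k hk

theorem HB.upd {𝒰 : H → Submodule F U} (hgr : IsAlgGrading F 𝒰) {deg : ι → H} {a : ι → U}
    {d : ι × ι × ι → F} (h : HB 𝒰 deg a d) {u : FreeNonUnitalNonAssocAlgebra F (ι ⊕ ι)}
    (hu : IsAlt F U deg u) (i j k : ι) (hk : deg k = deg i * deg j) (z : ι → U) :
    ev (Function.update a k (a i * a j)) z u = d (i, j, k) • ev a z u := by
  have h0 := h.mem hgr i j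
  rw [← hk] at h0
  have h1 := homog_proj hgr deg a h.1 (fun k => d (i, j, k)) _ h0
  rw [h.2.2, h1]
  exact hu.update a z k (fun l => d (i, j, l))

theorem lift_map {X Y : Type*} (c : X → Y) (v : Y → U) (f : FreeNonUnitalNonAssocAlgebra F X) :
    FreeNonUnitalNonAssocAlgebra.lift F v
      (FreeNonUnitalNonAssocAlgebra.lift F (FreeNonUnitalNonAssocAlgebra.of F ∘ c) f) =
    FreeNonUnitalNonAssocAlgebra.lift F (v ∘ c) f := by
  have : (FreeNonUnitalNonAssocAlgebra.lift F v).comp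
      (FreeNonUnitalNonAssocAlgebra.lift F (FreeNonUnitalNonAssocAlgebra.of F ∘ c)) =
      FreeNonUnitalNonAssocAlgebra.lift F (v ∘ c) := by
    ext i
    have e1 := FreeNonUnitalNonAssocAlgebra.lift_of_apply F (FreeNonUnitalNonAssocAlgebra.of F ∘ c) i
    have e2 := FreeNonUnitalNonAssocAlgebra.lift_of_apply F v (c i)
    have e3 := FreeNonUnitalNonAssocAlgebra.lift_of_apply F (v ∘ c) i
    change FreeNonUnitalNonAssocAlgebra.lift F v
      (FreeNonUnitalNonAssocAlgebra.lift F (FreeNonUnitalNonAssocAlgebra.of F ∘ c)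
        (FreeNonUnitalNonAssocAlgebra.of F i)) = FreeNonUnitalNonAssocAlgebra.lift F (v ∘ c)
        (FreeNonUnitalNonAssocAlgebra.of F i)
    rw [e1, e3]
    exact e2
  exact congrArg (fun g : FreeNonUnitalNonAssocAlgebra F X →ₙₐ[F] U => g f) this

theorem transfer {𝒰 : H → Submodule F U} {𝒲 : H → Submodule F W}
    (h : ∀ f : FreeNonUnitalNonAssocAlgebra F (H × ℕ), IsGradedPI F 𝒰 f → IsGradedPI F 𝒲 f)
    (deg : ι → H) (f : FreeNonUnitalNonAssocAlgebra F (ι ⊕ ι))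
    (hf : ∀ x z : ι → U, (∀ i, x i ∈ 𝒰 (deg i)) → (∀ i, z i ∈ 𝒰 (deg i)) → ev x z f = 0)
    (x z : ι → W) (hx : ∀ i, x i ∈ 𝒲 (deg i)) (hz : ∀ i, z i ∈ 𝒲 (deg i)) : ev x z f = 0 := by
  let c : ι ⊕ ι → H × ℕ := fun s => (Sum.elim deg deg s, (Fintype.equivFin (ι ⊕ ι) s).val)
  have hc : Function.Injective c := by
    intro s t hst
    exact (Fintype.equivFin (ι ⊕ ι)).injective (Fin.ext (congrArg Prod.snd hst))
  have hPI : IsGradedPI F 𝒰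
      (FreeNonUnitalNonAssocAlgebra.lift F (FreeNonUnitalNonAssocAlgebra.of F ∘ c) f) := by
    intro v hv
    rw [lift_map]
    have := hf (fun i => v (c (Sum.inl i))) (fun i => v (c (Sum.inr i))) (fun i => hv (c (Sum.inl i)))
      (fun i => hv (c (Sum.inr i)))
    rw [ev] at this
    convert this using 3
    funext s
    rcases s with s | s <;> rfl
  have := h _ hPI (Function.extend c (Sum.elim x z) 0) ?_
  · rw [lift_map, Function.extend_comp hc] at this
    exact this
  · intro p
    by_cases hp : ∃ s, c s = p
    · obtain ⟨s, rfl⟩ := hp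
      rw [hc.extend_apply]
      rcases s with s | s
      · exact hx s
      · exact hz s
    · rw [Function.extend_apply' _ _ _ hp]
      exact Submodule.zero_mem _

theorem exists_indep [IsAlgClosed F] [FiniteDimensional F W] {𝒰 : H → Submodule F U}
    {𝒲 : H → Submodule F W} (hgrU : IsAlgGrading F 𝒰) (hgr : IsAlgGrading F 𝒲)
    (hs : IsGradedSimple F 𝒲)
    (h : ∀ f : FreeNonUnitalNonAssocAlgebra F (H × ℕ), IsGradedPI F 𝒰 f → IsGradedPI F 𝒲 f)
    (deg : ι → H) (b : Module.Basis ι F W) (hb : ∀ i, b i ∈ 𝒲 (deg i)) :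
    ∃ x : ι → U, (∀ i, x i ∈ 𝒰 (deg i)) ∧ LinearIndependent F x := by
  obtain ⟨p, q, hpq⟩ := hs.1
  obtain ⟨u, hu1, hu2, hu3⟩ := exists_alt U hgr hs deg b hb (p * q)
  by_contra! hcon
  refine hpq (hu3.symm.trans ?_)
  exact transfer h deg u (fun x z hx _ => hu1.dep hgrU x z hx (hcon x hx)) b b hb hb

theorem exists_basis [FiniteDimensional F U] (x : ι → U) (hx : LinearIndependent F x)
    (hc : Fintype.card ι = Module.finrank F U) : ∃ b : Module.Basis ι F U, ⇑b = x :=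
  ⟨Module.Basis.mk hx (hx.span_eq_top_of_card_eq_finrank' hc).ge, by simp⟩

theorem exists_HB [FiniteDimensional F U] {𝒰 : H → Submodule F U} (deg : ι → H) (x : ι → U)
    (hm : ∀ i, x i ∈ 𝒰 (deg i)) (hx : LinearIndependent F x)
    (hc : Fintype.card ι = Module.finrank F U) : ∃ d, HB 𝒰 deg x d := by
  obtain ⟨b, rfl⟩ := exists_basis x hx hc
  exact ⟨fun t => b.repr (b t.1 * b t.2.1) t.2.2, hm, hx, fun i j => (b.sum_repr _).symm⟩

open MvPolynomial in
/-- ideal of values of denominators -/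
def JIdeal (𝒰 : H → Submodule F U) (deg : ι → H) (b : Module.Basis ι F W) (dB : ι × ι × ι → F)
    (p : MvPolynomial (ι × ι × ι) F) : Submodule F W where
  carrier := {w | ∃ f u : FreeNonUnitalNonAssocAlgebra F (ι ⊕ ι),
    (∀ a d z, HB 𝒰 deg a d → ev a z f = eval d p • ev a z u) ∧
    ev b b f = eval dB p • ev b b u ∧ ev b b u = w}
  add_mem' := by
    rintro w w' ⟨f, u, h1, h2, h3⟩ ⟨f', u', h1', h2', h3'⟩
    refine ⟨f + f', u + u', fun a d z h => ?_, ?_, ?_⟩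
    · rw [map_add, map_add, h1 a d z h, h1' a d z h, smul_add]
    · rw [map_add, map_add, h2, h2', smul_add]
    · rw [map_add, h3, h3']
  zero_mem' := ⟨0, 0, fun a d z _ => by simp, by simp, by simp⟩
  smul_mem' := by
    rintro c w ⟨f, u, h1, h2, h3⟩
    refine ⟨c • f, c • u, fun a d z h => ?_, ?_, ?_⟩
    · rw [map_smul, map_smul, h1 a d z h, smul_comm]
    · rw [map_smul, map_smul, h2, smul_comm]
    · rw [map_smul, h3]

theorem jideal_isIdeal (𝒰 : H → Submodule F U) (deg : ι → H) (b : Module.Basis ι F W)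
    (dB : ι × ι × ι → F) (p : MvPolynomial (ι × ι × ι) F) :
    IsMulIdeal F (JIdeal 𝒰 deg b dB p) := by
  rintro w' w ⟨f, u, h1, h2, h3⟩
  constructor
  · refine ⟨zpoly b w' * f, zpoly b w' * u, fun a d z h => ?_, ?_, ?_⟩
    · rw [map_mul, map_mul, h1 a d z h, mul_smul_comm]
    · rw [map_mul, map_mul, h2, mul_smul_comm]
    · rw [map_mul, h3, ev_zpoly_self]
  · refine ⟨f * zpoly b w', u * zpoly b w', fun a d z h => ?_, ?_, ?_⟩
    · rw [map_mul, map_mul, h1 a d z h, smul_mul_assoc]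
    · rw [map_mul, map_mul, h2, smul_mul_assoc]
    · rw [map_mul, h3, ev_zpoly_self]

theorem jideal_top [IsAlgClosed F] [FiniteDimensional F W] {𝒰 : H → Submodule F U}
    {𝒲 : H → Submodule F W} (hgrU : IsAlgGrading F 𝒰) (hgr : IsAlgGrading F 𝒲)
    (hs : IsGradedSimple F 𝒲) (deg : ι → H) (b : Module.Basis ι F W)
    (dB : ι × ι × ι → F) (hB : HB 𝒲 deg b dB) (p : MvPolynomial (ι × ι × ι) F) :
    JIdeal 𝒰 deg b dB p = ⊤ := by
  obtain ⟨g, h, p0, hp0, q0, hq0, hpq⟩ := exists_hom_mul_ne hgr hs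
  induction p using MvPolynomial.induction_on with
  | C c =>
    refine eq_top_iff.mpr fun w _ => ⟨c • zpoly b w, zpoly b w, fun a d z _ => ?_, ?_, ?_⟩
    · rw [map_smul, MvPolynomial.eval_C]
    · rw [map_smul, MvPolynomial.eval_C]
    · rw [ev_zpoly_self]
  | add p q hp hq =>
    refine ideal_eq_top hgr hs _ (jideal_isIdeal 𝒰 deg b dB _) (w := p0 * q0) ?_
      (hgr.2 _ _ _ hp0 _ hq0) hpq
    have m1 : p0 ∈ JIdeal 𝒰 deg b dB p := by rw [hp]; trivial
    have m2 : q0 ∈ JIdeal 𝒰 deg b dB q := by rw [hq]; trivial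
    obtain ⟨f, u, h1, h2, h3⟩ := m1
    obtain ⟨f', u', h1', h2', h3'⟩ := m2
    refine ⟨f * u' + u * f', u * u', fun a d z h => ?_, ?_, ?_⟩
    · simp only [map_mul, map_add]
      rw [h1 a d z h, h1' a d z h, smul_mul_assoc, mul_smul_comm, add_smul]
    · simp only [map_mul, map_add]
      rw [h2, h2', smul_mul_assoc, mul_smul_comm, add_smul]
    · rw [map_mul, h3, h3']
  | mul_X p t hp =>
    have hq : JIdeal 𝒰 deg b dB (MvPolynomial.X t) = ⊤ := by
      obtain ⟨i, j, k⟩ := t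
      refine eq_top_iff.mpr fun w _ => ?_
      obtain ⟨u, hu1, hu2, hu3⟩ := exists_alt U hgr hs deg b hB.1 w
      by_cases hk : deg k = deg i * deg j
      · refine ⟨sub (Function.update (fun l => FreeNonUnitalNonAssocAlgebra.of F (Sum.inl l)) k
          (FreeNonUnitalNonAssocAlgebra.of F (Sum.inl i) *
            FreeNonUnitalNonAssocAlgebra.of F (Sum.inl j))) u, u, fun a d z h => ?_, ?_, hu3⟩
        · rw [ev_sub, MvPolynomial.eval_X, ← h.upd hgrU hu1 i j k hk z]
          congr 2
          funext l
          by_cases hl : l = k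
          · subst hl
            simp [ev_inl]
          · simp [ev_inl, Function.update_of_ne hl]
        · rw [ev_sub, MvPolynomial.eval_X, ← hB.upd hgr hu2 i j k hk b]
          congr 2
          funext l
          by_cases hl : l = k
          · subst hl
            simp [ev_inl]
          · simp [ev_inl, Function.update_of_ne hl]
      · refine ⟨0, u, fun a d z h => ?_, ?_, hu3⟩
        · rw [MvPolynomial.eval_X, h.off hgrU i j k hk, map_zero, zero_smul]
        · rw [MvPolynomial.eval_X, hB.off hgr i j k hk, map_zero, zero_smul]
    refine ideal_eq_top hgr hs _ (jideal_isIdeal 𝒰 deg b dB _) (w := p0 * q0) ?_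
      (hgr.2 _ _ _ hp0 _ hq0) hpq
    have m1 : p0 ∈ JIdeal 𝒰 deg b dB p := by rw [hp]; trivial
    have m2 : q0 ∈ JIdeal 𝒰 deg b dB (MvPolynomial.X t) := by rw [hq]; trivial
    obtain ⟨f, u, h1, h2, h3⟩ := m1
    obtain ⟨f', u', h1', h2', h3'⟩ := m2
    refine ⟨f * f', u * u', fun a d z h => ?_, ?_, ?_⟩
    · simp only [map_mul]
      rw [h1 a d z h, h1' a d z h, smul_mul_assoc, mul_smul_comm, mul_smul]
    · simp only [map_mul]
      rw [h2, h2', smul_mul_assoc, mul_smul_comm, mul_smul]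
    · rw [map_mul, h3, h3']

theorem key_lemma [IsAlgClosed F] [FiniteDimensional F U] [FiniteDimensional F W]
    {𝒰 : H → Submodule F U}
    {𝒲 : H → Submodule F W} (hgrU : IsAlgGrading F 𝒰) (hgr : IsAlgGrading F 𝒲)
    (hs : IsGradedSimple F 𝒲)
    (h : ∀ f : FreeNonUnitalNonAssocAlgebra F (H × ℕ), IsGradedPI F 𝒰 f → IsGradedPI F 𝒲 f)
    (deg : ι → H) (hcU : Fintype.card ι = Module.finrank F U)
    (hcW : Fintype.card ι = Module.finrank F W)
    (p : MvPolynomial (ι × ι × ι) F)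
    (hp : ∀ a d, HB 𝒰 deg a d → MvPolynomial.eval d p = 0)
    (b : ι → W) (dB : ι × ι × ι → F) (hB : HB 𝒲 deg b dB) : MvPolynomial.eval dB p = 0 := by
  obtain ⟨b, rfl⟩ := exists_basis b hB.2.1 hcW
  obtain ⟨p0, q0, hpq⟩ := hs.1
  have m1 : p0 ∈ JIdeal 𝒰 deg b dB p := by rw [jideal_top hgrU hgr hs deg b dB hB]; trivial
  obtain ⟨f, u, h1, h2, h3⟩ := m1
  obtain ⟨u0, hu1, hu2, hu3⟩ := exists_alt U hgr hs deg b hB.1 q0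
  have := transfer h deg (f * u0) ?_ b b hB.1 hB.1
  · rw [map_mul, h2, h3, hu3, smul_mul_assoc] at this
    exact (smul_eq_zero.mp this).resolve_right hpq
  · intro x z hx hz
    rw [map_mul]
    by_cases hli : LinearIndependent F x
    · obtain ⟨d, hd⟩ := exists_HB deg x hx hli hcU
      rw [h1 x d z hd, hp x d hd, zero_smul, zero_mul]
    · rw [hu1.dep hgrU x z hx hli, mul_zero]

/-- equations of the variety of homogeneous bases -/
def SX (deg : ι → H) (c : ι × ι × ι → F) :
    Set (MvPolynomial (((ι × ι) ⊕ (ι × ι)) ⊕ (ι × ι × ι)) F) :=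
  {f | (∃ i p, deg i ≠ deg p ∧ f = MvPolynomial.X (Sum.inl (Sum.inl (i, p)))) ∨
    (∃ i j, f = (∑ p, MvPolynomial.X (Sum.inl (Sum.inl (i, p))) *
      MvPolynomial.X (Sum.inl (Sum.inr (p, j)))) - MvPolynomial.C (if i = j then 1 else 0)) ∨
    (∃ i j r, f = (∑ p, ∑ q, MvPolynomial.X (Sum.inl (Sum.inl (i, p))) *
      MvPolynomial.X (Sum.inl (Sum.inl (j, q))) * MvPolynomial.C (c (p, q, r))) -
      ∑ k, MvPolynomial.X (Sum.inr (i, j, k)) * MvPolynomial.X (Sum.inl (Sum.inl (k, r))))}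

theorem sx_iff (deg : ι → H) (c : ι × ι × ι → F)
    (v : ((ι × ι) ⊕ (ι × ι)) ⊕ (ι × ι × ι) → F) :
    (∀ f ∈ SX deg c, MvPolynomial.eval v f = 0) ↔
      (∀ i p, deg i ≠ deg p → v (Sum.inl (Sum.inl (i, p))) = 0) ∧
      (∀ i j, ∑ p, v (Sum.inl (Sum.inl (i, p))) * v (Sum.inl (Sum.inr (p, j))) =
        if i = j then 1 else 0) ∧
      (∀ i j r, ∑ p, ∑ q, v (Sum.inl (Sum.inl (i, p))) * v (Sum.inl (Sum.inl (j, q))) *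
        c (p, q, r) = ∑ k, v (Sum.inr (i, j, k)) * v (Sum.inl (Sum.inl (k, r)))) := by
  constructor
  · intro h
    refine ⟨fun i p hip => ?_, fun i j => ?_, fun i j r => ?_⟩
    · have := h _ (Or.inl ⟨i, p, hip, rfl⟩)
      simpa using this
    · have := h _ (Or.inr (Or.inl ⟨i, j, rfl⟩))
      simp only [map_sub, map_sum, map_mul, MvPolynomial.eval_X, MvPolynomial.eval_C] at this
      exact sub_eq_zero.mp this
    · have := h _ (Or.inr (Or.inr ⟨i, j, r, rfl⟩))
      simp only [map_sub, map_sum, map_mul, MvPolynomial.eval_X, MvPolynomial.eval_C] at this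
      exact sub_eq_zero.mp this
  · rintro ⟨h1, h2, h3⟩ f (⟨i, p, hip, rfl⟩ | ⟨i, j, rfl⟩ | ⟨i, j, r, rfl⟩)
    · simpa using h1 i p hip
    · simp only [map_sub, map_sum, map_mul, MvPolynomial.eval_X, MvPolynomial.eval_C]
      exact sub_eq_zero.mpr (h2 i j)
    · simp only [map_sub, map_sum, map_mul, MvPolynomial.eval_X, MvPolynomial.eval_C]
      exact sub_eq_zero.mpr (h3 i j r)

theorem mul_comb {x : ι → U} {c : ι × ι × ι → F}
    (hx : ∀ i j, x i * x j = ∑ k, c (i, j, k) • x k) (s t : ι → F) :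
    (∑ p, s p • x p) * (∑ q, t q • x q) =
      ∑ r, (∑ p, ∑ q, s p * t q * c (p, q, r)) • x r := by
  rw [Finset.sum_mul_sum]
  simp only [smul_mul_smul_comm, hx, Finset.smul_sum, Finset.sum_smul, smul_smul]
  calc _ = ∑ p, ∑ r, ∑ q, (s p * t q * c (p, q, r)) • x r :=
        Finset.sum_congr rfl fun p _ => Finset.sum_comm
    _ = _ := Finset.sum_comm

theorem comb_comb (x : ι → U) (s : ι → F) (t : ι → ι → F) :
    ∑ k, s k • ∑ r, t k r • x r = ∑ r, (∑ k, s k * t k r) • x r := by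
  simp only [Finset.smul_sum, Finset.sum_smul, smul_smul]
  exact Finset.sum_comm

theorem sx_hb {𝒰 : H → Submodule F U} {deg : ι → H} {x : ι → U} {c : ι × ι × ι → F}
    (hx : HB 𝒰 deg x c) (v : ((ι × ι) ⊕ (ι × ι)) ⊕ (ι × ι × ι) → F)
    (hv : ∀ f ∈ SX deg c, MvPolynomial.eval v f = 0) :
    HB 𝒰 deg (fun i => ∑ p, v (Sum.inl (Sum.inl (i, p))) • x p) (v ∘ Sum.inr) := by
  obtain ⟨h1, h2, h3⟩ := (sx_iff deg c v).mp hv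
  refine ⟨fun i => ?_, ?_, fun i j => ?_⟩
  · refine Submodule.sum_mem _ fun p _ => ?_
    by_cases hip : deg i = deg p
    · rw [hip]
      exact Submodule.smul_mem _ _ (hx.1 p)
    · rw [h1 i p hip, zero_smul]
      exact Submodule.zero_mem _
  · rw [Fintype.linearIndependent_iff]
    intro g hg j
    rw [comb_comb x g (fun k r => v (Sum.inl (Sum.inl (k, r))))] at hg
    have hz := Fintype.linearIndependent_iff.mp hx.2.1 _ hg
    calc g j = ∑ i, g i * ∑ p, v (Sum.inl (Sum.inl (i, p))) * v (Sum.inl (Sum.inr (p, j))) := by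
          simp [h2]
      _ = ∑ p, (∑ i, g i * v (Sum.inl (Sum.inl (i, p)))) * v (Sum.inl (Sum.inr (p, j))) := by
          simp only [Finset.mul_sum, Finset.sum_mul, mul_assoc]
          exact Finset.sum_comm
      _ = 0 := by simp [hz]
  · rw [mul_comb hx.2.2]
    simp only [Function.comp_apply]
    rw [comb_comb x (fun k => v (Sum.inr (i, j, k))) (fun k r => v (Sum.inl (Sum.inl (k, r))))]
    refine Finset.sum_congr rfl fun r _ => ?_
    rw [h3]

theorem hb_sx {𝒰 : H → Submodule F U} (hgr : IsAlgGrading F 𝒰) {deg : ι → H}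
    (x a : Module.Basis ι F U) {c d : ι × ι × ι → F}
    (hx : HB 𝒰 deg x c) (ha : HB 𝒰 deg a d) :
    ∃ v : ((ι × ι) ⊕ (ι × ι)) ⊕ (ι × ι × ι) → F,
      (∀ f ∈ SX deg c, MvPolynomial.eval v f = 0) ∧ v ∘ Sum.inr = d := by
  refine ⟨Sum.elim (Sum.elim (fun t => x.repr (a t.1) t.2) (fun t => a.repr (x t.1) t.2)) d,
    (sx_iff deg c _).mpr ⟨fun i p hip => ?_, fun i j => ?_, fun i j r => ?_⟩, rfl⟩
  · simp only [Sum.elim_inl]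
    refine homog_coeff hgr deg hx.1 hx.2.1 (fun p => x.repr (a i) p) (deg i) ?_ p (Ne.symm hip)
    rw [x.sum_repr]
    exact ha.1 i
  · simp only [Sum.elim_inl, Sum.elim_inr]
    have h1 : a.repr (∑ p, x.repr (a i) p • x p) j = ∑ p, x.repr (a i) p * a.repr (x p) j := by
      rw [map_sum, Finsupp.finset_sum_apply]
      simp only [map_smul, Finsupp.smul_apply, smul_eq_mul]
    rw [← h1, x.sum_repr, a.repr_self, Finsupp.single_apply]
  · simp only [Sum.elim_inl, Sum.elim_inr]
    have h1 := ha.2.2 i j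
    have h2 := mul_comb hx.2.2 (fun p => x.repr (a i) p) (fun p => x.repr (a j) p)
    have h3 := comb_comb x (fun k => d (i, j, k)) (fun k r => x.repr (a k) r)
    simp only [x.sum_repr] at h2 h3
    rw [← h1, h2] at h3
    have h4 := congrArg (fun y => x.repr y r) h3
    simpa only [x.repr_sum_self] using h4

theorem basis_map_mem {𝒰 : H → Submodule F U} {𝒲 : H → Submodule F W}
    (hgr : IsAlgGrading F 𝒰) {deg : ι → H} (a : Module.Basis ι F U) (b : ι → W)
    (ha : ∀ i, a i ∈ 𝒰 (deg i)) (hb : ∀ i, b i ∈ 𝒲 (deg i)) (ψ : U →ₗ[F] W)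
    (hψ : ∀ i, ψ (a i) = b i) (g : H) (y : U) (hy : y ∈ 𝒰 g) : ψ y ∈ 𝒲 g := by
  have hz := homog_coeff hgr deg ha a.linearIndependent (fun i => a.repr y i) g
    (by rw [a.sum_repr]; exact hy)
  rw [← a.sum_repr y, map_sum]
  refine Submodule.sum_mem _ fun i _ => ?_
  rw [map_smul, hψ]
  by_cases hi : deg i = g
  · rw [← hi]
    exact Submodule.smul_mem _ _ (hb i)
  · have := hz i hi
    rw [this, zero_smul]
    exact Submodule.zero_mem _

theorem iso_of_hb [FiniteDimensional F U] [FiniteDimensional F W]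
    {𝒰 : H → Submodule F U} {𝒲 : H → Submodule F W}
    (hgrU : IsAlgGrading F 𝒰) (hgr : IsAlgGrading F 𝒲) {deg : ι → H}
    (hcU : Fintype.card ι = Module.finrank F U) (hcW : Fintype.card ι = Module.finrank F W)
    (a : ι → U) (b : ι → W) (d : ι × ι × ι → F) (ha : HB 𝒰 deg a d) (hb : HB 𝒲 deg b d) :
    IsGradedIso F 𝒰 𝒲 := by
  obtain ⟨a, rfl⟩ := exists_basis a ha.2.1 hcU
  obtain ⟨b, rfl⟩ := exists_basis b hb.2.1 hcW
  let ψ : U ≃ₗ[F] W := a.equiv b (Equiv.refl ι)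
  have hψ : ∀ i, ψ (a i) = b i := fun i => by simp [ψ]
  refine ⟨ψ, fun x y => ?_, fun g => le_antisymm ?_ ?_⟩
  · have hx := a.sum_repr x
    have hy := a.sum_repr y
    rw [← hx, ← hy, mul_comb ha.2.2]
    simp only [map_sum, map_smul, hψ]
    rw [mul_comb hb.2.2]
  · rintro _ ⟨y, hy, rfl⟩
    exact basis_map_mem hgrU a b ha.1 hb.1 (ψ : U →ₗ[F] W) hψ g y hy
  · intro y hy
    refine ⟨ψ.symm y, ?_, by simp⟩
    refine basis_map_mem hgr b a hb.1 ha.1 (ψ.symm : W →ₗ[F] U) (fun i => ?_) g y hy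
    rw [← hψ]
    simp

theorem pi_of_map {𝒰 : H → Submodule F U} {𝒲 : H → Submodule F W} (ψ : U ≃ₗ[F] W)
    (hmul : ∀ x y, ψ (x * y) = ψ x * ψ y) (hle : ∀ g, ∀ w ∈ 𝒲 g, ψ.symm w ∈ 𝒰 g)
    (f : FreeNonUnitalNonAssocAlgebra F (H × ℕ)) (hf : IsGradedPI F 𝒰 f) :
    IsGradedPI F 𝒲 f := by
  intro v hv
  let φ : U →ₙₐ[F] W :=
    { toFun := ψ
      map_smul' := fun c x => map_smul ψ c x
      map_zero' := map_zero ψ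
      map_add' := map_add ψ
      map_mul' := hmul }
  have h1 := hf (fun p => ψ.symm (v p)) (fun p => hle _ _ (hv p))
  have h2 : φ.comp (FreeNonUnitalNonAssocAlgebra.lift F (fun p => ψ.symm (v p))) =
      FreeNonUnitalNonAssocAlgebra.lift F v := by
    ext i
    have e1 := FreeNonUnitalNonAssocAlgebra.lift_of_apply F (fun p => ψ.symm (v p)) i
    have e2 := FreeNonUnitalNonAssocAlgebra.lift_of_apply F v i
    change ψ (FreeNonUnitalNonAssocAlgebra.lift F (fun p => ψ.symm (v p))
      (FreeNonUnitalNonAssocAlgebra.of F i)) = FreeNonUnitalNonAssocAlgebra.lift F v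
        (FreeNonUnitalNonAssocAlgebra.of F i)
    rw [e1, e2]
    simp
  rw [← h2]
  change ψ (FreeNonUnitalNonAssocAlgebra.lift F (fun p => ψ.symm (v p)) f) = 0
  rw [h1, map_zero]

theorem exists_homog_basis [FiniteDimensional F U] {𝒰 : H → Submodule F U}
    (hgr : IsAlgGrading F 𝒰) :
    ∃ (n : ℕ) (deg : Fin n → H) (b : Module.Basis (Fin n) F U), ∀ i, b i ∈ 𝒰 (deg i) := by
  let b0 := hgr.1.collectedBasis (fun g => Module.finBasis F (𝒰 g))
  have := FiniteDimensional.fintypeBasisIndex b0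
  let e := Fintype.equivFin (Σ g, Fin (Module.finrank F (𝒰 g)))
  refine ⟨_, fun i => (e.symm i).1, b0.reindex e, fun i => ?_⟩
  rw [Module.Basis.reindex_apply]
  exact hgr.1.collectedBasis_mem _ _

theorem iso_of_pi [IsAlgClosed F] [FiniteDimensional F U] [FiniteDimensional F W]
    {𝒰 : H → Submodule F U} {𝒲 : H → Submodule F W}
    (hgrU : IsAlgGrading F 𝒰) (hgr : IsAlgGrading F 𝒲)
    (hsU : IsGradedSimple F 𝒰) (hs : IsGradedSimple F 𝒲)
    (h : ∀ f : FreeNonUnitalNonAssocAlgebra F (H × ℕ), IsGradedPI F 𝒰 f ↔ IsGradedPI F 𝒲 f) :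
    IsGradedIso F 𝒰 𝒲 := by
  obtain ⟨n, deg, b, hb⟩ := exists_homog_basis hgr
  obtain ⟨m, deg', a', ha'⟩ := exists_homog_basis hgrU
  obtain ⟨x, hx, hxli⟩ := exists_indep hgrU hgr hs (fun f => (h f).mp) deg b hb
  obtain ⟨y, hy, hyli⟩ := exists_indep hgr hgrU hsU (fun f => (h f).mpr) deg' a' ha'
  have hcW : Fintype.card (Fin n) = Module.finrank F W := (Module.finrank_eq_card_basis b).symm
  have hcU : Fintype.card (Fin n) = Module.finrank F U := by
    apply le_antisymm hxli.fintype_card_le_finrank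
    rw [hcW, Module.finrank_eq_card_basis a']
    exact hyli.fintype_card_le_finrank
  obtain ⟨c, hc⟩ := exists_HB deg x hx hxli hcU
  obtain ⟨dB, hdB⟩ := exists_HB deg b hb b.linearIndependent hcW
  obtain ⟨xb, hxb⟩ := exists_basis x hxli hcU
  subst hxb
  have eU : ∀ p : MvPolynomial (Fin n × Fin n × Fin n) F,
      (∀ v, (∀ q ∈ SX deg c, MvPolynomial.eval v q = 0) →
        MvPolynomial.eval (v ∘ Sum.inr) p = 0) ↔ ∀ a d, HB 𝒰 deg a d →
        MvPolynomial.eval d p = 0 := by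
    intro p
    constructor
    · intro hp a d had
      obtain ⟨ab, rfl⟩ := exists_basis a had.2.1 hcU
      obtain ⟨v, hv, rfl⟩ := hb_sx hgrU xb ab hc had
      exact hp v hv
    · intro hp v hv
      exact hp _ _ (sx_hb hc v hv)
  have eW : ∀ p : MvPolynomial (Fin n × Fin n × Fin n) F,
      (∀ v, (∀ q ∈ SX deg dB, MvPolynomial.eval v q = 0) →
        MvPolynomial.eval (v ∘ Sum.inr) p = 0) ↔ ∀ a d, HB 𝒲 deg a d →
        MvPolynomial.eval d p = 0 := by
    intro p
    constructor
    · intro hp a d had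
      obtain ⟨ab, rfl⟩ := exists_basis a had.2.1 hcW
      obtain ⟨v, hv, rfl⟩ := hb_sx hgr b ab hdB had
      exact hp v hv
    · intro hp v hv
      exact hp _ _ (sx_hb hdB v hv)
  obtain ⟨vA, vB, hA, hB, hAB⟩ := elim_points (SX deg c) (SX deg dB) (fun p => by
    rw [eU, eW]
    exact ⟨fun hp a d had => key_lemma hgrU hgr hs (fun f => (h f).mp) deg hcU hcW p hp a d had,
      fun hp a d had => key_lemma hgr hgrU hsU (fun f => (h f).mpr) deg hcW hcU p hp a d had⟩)
    (by
      obtain ⟨v, hv, -⟩ := hb_sx hgrU xb xb hc hc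
      exact ⟨v, hv⟩)
  have h1 := sx_hb hc vA hA
  have h2 := sx_hb hdB vB hB
  rw [← hAB] at h2
  exact iso_of_hb hgrU hgr hcU hcW _ _ _ h1 h2

end Final

end GradedPart

/-- **Theorem (main).** Over an algebraically closed field `F` and an abelian group `G`, two
finite-dimensional `G`-graded simple (not necessarily associative) `F`-algebras satisfy the same
`G`-graded polynomial identities if and only if they are isomorphic as graded algebras. -/
theorem graded_simple_same_graded_identities_iff_graded_iso
    {F : Type*} [Field F] [IsAlgClosed F]
    {G : Type*} [CommGroup G] [DecidableEq G]
    {A B : Type*}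
    [NonUnitalNonAssocRing A] [Module F A] [SMulCommClass F A A] [IsScalarTower F A A]
    [NonUnitalNonAssocRing B] [Module F B] [SMulCommClass F B B] [IsScalarTower F B B]
    [FiniteDimensional F A] [FiniteDimensional F B]
    (𝒜 : G → Submodule F A) (ℬ : G → Submodule F B)
    (hgrA : IsAlgGrading F 𝒜) (hgrB : IsAlgGrading F ℬ)
    (hsimpA : IsGradedSimple F 𝒜) (hsimpB : IsGradedSimple F ℬ) :
    (∀ f : FreeNonUnitalNonAssocAlgebra F (G × ℕ), IsGradedPI F 𝒜 f ↔ IsGradedPI F ℬ f) ↔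
      IsGradedIso F 𝒜 ℬ := by
  constructor
  · exact iso_of_pi hgrA hgrB hsimpA hsimpB
  · rintro ⟨ψ, hmul, hmap⟩ f
    constructor
    · refine pi_of_map ψ hmul (fun g w hw => ?_) f
      rw [← hmap g] at hw
      obtain ⟨y, hy, rfl⟩ := hw
      simpa using hy
    · refine pi_of_map ψ.symm (fun x y => ?_) (fun g w hw => ?_) f
      · apply ψ.injective
        rw [hmul]
        simp
      · rw [← hmap g]
        exact ⟨w, hw, rfl⟩

end
end

section
/- Let U and V be F-algebras (not necessarily associative). If U and V satisfy the same ordinary polynomial identities, then their multiplication algebras M(U) and M(V) satisfy the same ordinary (associative) polynomial identities. -/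
noncomputable section

variable (K : Type*) [Field K]

/-- `f` is an ordinary (associative) polynomial identity of the subset `S` of the associative
unital algebra `B`. -/
def IsAssocPIOn {B : Type*} [Ring B] [Algebra K B] (S : Set B) (f : FreeAlgebra K ℕ) : Prop :=
  ∀ v : ℕ → B, (∀ i, v i ∈ S) → FreeAlgebra.lift K v f = 0

end

theorem interlift {F : Type*} [Field F] {P B : Type*}
    [AddCommMonoid P] [Module F P] [AddCommMonoid B] [Module F B]
    (φ : P →ₗ[F] B) (v : ℕ → Module.End F B) (p : ℕ → Module.End F P)
    (h : ∀ i x, v i (φ x) = φ (p i x)) (f : FreeAlgebra F ℕ) :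
    ∀ x, FreeAlgebra.lift F v f (φ x) = φ (FreeAlgebra.lift F p f x) := by
  induction f using FreeAlgebra.induction with
  | grade0 r => intro x; simp [Module.algebraMap_end_apply]
  | grade1 i => intro x; simpa using h i x
  | mul a b ha hb => intro x; simp [ha, hb]
  | add a b ha hb => intro x; simp [ha, hb]

theorem multAlg_push {F : Type*} [Field F] {P A : Type*}
    [NonUnitalNonAssocSemiring P] [Module F P] [SMulCommClass F P P] [IsScalarTower F P P]
    [NonUnitalNonAssocSemiring A] [Module F A] [SMulCommClass F A A] [IsScalarTower F A A]
    (ψ : P →ₙₐ[F] A) (p : Module.End F P) (hp : p ∈ MultAlg F (A := P)) :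
    ∃ q ∈ MultAlg F (A := A), ∀ x, q (ψ x) = ψ (p x) := by
  unfold MultAlg at hp
  induction hp using NonUnitalAlgebra.adjoin_induction with
  | mem m hm =>
    rcases hm with ⟨a, rfl⟩ | ⟨a, rfl⟩
    · exact ⟨LinearMap.mulLeft F (ψ a), NonUnitalAlgebra.subset_adjoin F (Or.inl ⟨_, rfl⟩),
        fun x => by simp⟩
    · exact ⟨LinearMap.mulRight F (ψ a), NonUnitalAlgebra.subset_adjoin F (Or.inr ⟨_, rfl⟩),
        fun x => by simp⟩
  | zero => exact ⟨0, zero_mem _, fun x => by simp⟩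
  | add a b _ _ ha hb =>
    obtain ⟨q, hq, h⟩ := ha
    obtain ⟨q', hq', h'⟩ := hb
    exact ⟨q + q', add_mem hq hq', fun x => by simp [h, h']⟩
  | mul a b _ _ ha hb =>
    obtain ⟨q, hq, h⟩ := ha
    obtain ⟨q', hq', h'⟩ := hb
    exact ⟨q * q', mul_mem hq hq', fun x => by simp [h, h']⟩
  | smul c a _ ha =>
    obtain ⟨q, hq, h⟩ := ha
    exact ⟨c • q, SMulMemClass.smul_mem c hq, fun x => by simp [h]⟩

theorem multAlg_pull {F : Type*} [Field F] {B : Type*}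
    [NonUnitalNonAssocSemiring B] [Module F B] [SMulCommClass F B B] [IsScalarTower F B B]
    (m : Module.End F B) (hm : m ∈ MultAlg F (A := B)) :
    ∃ C : Set B, C.Countable ∧ ∀ s : ℕ → B, C ⊆ Set.range s →
      ∃ p ∈ MultAlg F (A := FreeNonUnitalNonAssocAlgebra F ℕ),
        ∀ x, m (FreeNonUnitalNonAssocAlgebra.lift F s x)
          = FreeNonUnitalNonAssocAlgebra.lift F s (p x) := by
  unfold MultAlg at hm
  induction hm using NonUnitalAlgebra.adjoin_induction with
  | mem m hm =>
    rcases hm with ⟨a, rfl⟩ | ⟨a, rfl⟩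
    · refine ⟨{a}, Set.countable_singleton a, fun s hs => ?_⟩
      obtain ⟨n, rfl⟩ := hs rfl
      exact ⟨LinearMap.mulLeft F (FreeNonUnitalNonAssocAlgebra.of F n),
        NonUnitalAlgebra.subset_adjoin F (Or.inl ⟨_, rfl⟩), fun x => by simp⟩
    · refine ⟨{a}, Set.countable_singleton a, fun s hs => ?_⟩
      obtain ⟨n, rfl⟩ := hs rfl
      exact ⟨LinearMap.mulRight F (FreeNonUnitalNonAssocAlgebra.of F n),
        NonUnitalAlgebra.subset_adjoin F (Or.inr ⟨_, rfl⟩), fun x => by simp⟩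
  | zero => exact ⟨∅, Set.countable_empty, fun s _ => ⟨0, zero_mem _, fun x => by simp⟩⟩
  | add a b _ _ ha hb =>
    obtain ⟨C, hC, h⟩ := ha
    obtain ⟨C', hC', h'⟩ := hb
    refine ⟨C ∪ C', hC.union hC', fun s hs => ?_⟩
    obtain ⟨q, hq, h⟩ := h s (Set.subset_union_left.trans hs)
    obtain ⟨q', hq', h'⟩ := h' s (Set.subset_union_right.trans hs)
    exact ⟨q + q', add_mem hq hq', fun x => by simp [h, h']⟩
  | mul a b _ _ ha hb =>
    obtain ⟨C, hC, h⟩ := ha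
    obtain ⟨C', hC', h'⟩ := hb
    refine ⟨C ∪ C', hC.union hC', fun s hs => ?_⟩
    obtain ⟨q, hq, h⟩ := h s (Set.subset_union_left.trans hs)
    obtain ⟨q', hq', h'⟩ := h' s (Set.subset_union_right.trans hs)
    exact ⟨q * q', mul_mem hq hq', fun x => by simp [h, h']⟩
  | smul c a _ ha =>
    obtain ⟨C, hC, h⟩ := ha
    refine ⟨C, hC, fun s hs => ?_⟩
    obtain ⟨q, hq, h⟩ := h s hs
    exact ⟨c • q, SMulMemClass.smul_mem c hq, fun x => by simp [h]⟩

theorem mult_one_dir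
    {F : Type*} [Field F] {A B : Type*}
    [NonUnitalNonAssocRing A] [Module F A] [SMulCommClass F A A] [IsScalarTower F A A]
    [NonUnitalNonAssocRing B] [Module F B] [SMulCommClass F B B] [IsScalarTower F B B]
    (hsame : ∀ f : FreeNonUnitalNonAssocAlgebra F ℕ, IsPI F (A := A) f → IsPI F (A := B) f)
    (f : FreeAlgebra F ℕ)
    (hf : IsAssocPIOn F (MultAlg F (A := A) : Set (Module.End F A)) f) :
    IsAssocPIOn F (MultAlg F (A := B) : Set (Module.End F B)) f := by
  intro v hv
  refine LinearMap.ext fun b => ?_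
  choose C hC hp using fun i => multAlg_pull (v i) (hv i)
  have hcount : (insert b (⋃ i, C i)).Countable := (Set.countable_iUnion hC).insert b
  obtain ⟨s, hs⟩ := hcount.exists_eq_range (Set.insert_nonempty _ _)
  have hsub : ∀ i, C i ⊆ Set.range s := fun i => by
    rw [← hs]
    exact (Set.subset_iUnion C i).trans (Set.subset_insert _ _)
  choose p hpm hpe using fun i => hp i s (hsub i)
  have hb : b ∈ Set.range s := hs ▸ Set.mem_insert _ _
  obtain ⟨n, rfl⟩ := hb
  have key := interlift (FreeNonUnitalNonAssocAlgebra.lift F s : _ →ₗ[F] B) v p hpe f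
    (FreeNonUnitalNonAssocAlgebra.of F n)
  have hPI : IsPI F (A := A) (FreeAlgebra.lift F p f (FreeNonUnitalNonAssocAlgebra.of F n)) := by
    intro u
    choose q hqm hqe using fun i =>
      multAlg_push (FreeNonUnitalNonAssocAlgebra.lift F u) (p i) (hpm i)
    have key' := interlift (FreeNonUnitalNonAssocAlgebra.lift F u : _ →ₗ[F] A) q p hqe f
      (FreeNonUnitalNonAssocAlgebra.of F n)
    rw [hf q hqm] at key'
    exact key'.symm
  have := hsame _ hPI s
  have e : (FreeNonUnitalNonAssocAlgebra.lift F s : _ →ₗ[F] B)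
      (FreeNonUnitalNonAssocAlgebra.of F n) = s n := by simp
  rw [e] at key
  rw [key]
  exact this

/-- If two (not necessarily associative) `F`-algebras satisfy the same ordinary polynomial
identities, then their multiplication algebras satisfy the same ordinary associative polynomial
identities. -/
theorem mult_algebras_satisfy_same_identities
    {F : Type*} [Field F] {A B : Type*}
    [NonUnitalNonAssocRing A] [Module F A] [SMulCommClass F A A] [IsScalarTower F A A]
    [NonUnitalNonAssocRing B] [Module F B] [SMulCommClass F B B] [IsScalarTower F B B]
    (hsame : ∀ f : FreeNonUnitalNonAssocAlgebra F ℕ, IsPI F (A := A) f ↔ IsPI F (A := B) f) :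
    ∀ f : FreeAlgebra F ℕ,
      IsAssocPIOn F (MultAlg F (A := A) : Set (Module.End F A)) f ↔
        IsAssocPIOn F (MultAlg F (A := B) : Set (Module.End F B)) f := by
  intro f
  exact ⟨mult_one_dir (fun g => (hsame g).1) f, mult_one_dir (fun g => (hsame g).2) f⟩
end

section
/- Let F ⊆ F̃ be a field extension, G an abelian group, Ũ a G-graded F̃-algebra, and U a homogeneous F-subalgebra of Ũ such that F̃·U = Ũ. Let M be the F-subalgebra of M(Ũ) generated by the left and right multiplications by elements of U. Then M is a homogeneous subalgebra of M(Ũ) with F̃·M = M(Ũ), and the map ψ: M → M(U) defined by ψ(m)(x) = m(x) for m ∈ M, x ∈ U, is an isomorphism of G-graded F-algebras. -/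
noncomputable section

variable (F : Type*) [Field F] (FF : Type*) [Field FF] [Algebra F FF]
variable {G : Type*} [CommGroup G] [DecidableEq G]
variable {tU : Type*} [NonUnitalNonAssocSemiring tU] [Module FF tU]
  [SMulCommClass FF tU tU] [IsScalarTower FF tU tU]
  [Module F tU] [IsScalarTower F FF tU] [SMulCommClass FF F tU]
  [SMulCommClass F tU tU] [IsScalarTower F tU tU]

/-- The `F`-subalgebra `M` of `M(Ũ)` generated by the left and right multiplications by elements
of the subalgebra `S`. -/
def multSubalgOn (S : NonUnitalSubalgebra F tU) : NonUnitalSubalgebra F (Module.End FF tU) :=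
  NonUnitalAlgebra.adjoin F
    ((fun a => LinearMap.mulLeft FF a) '' (S : Set tU) ∪
      (fun a => LinearMap.mulRight FF a) '' (S : Set tU))

theorem aux_maps (S : NonUnitalSubalgebra F tU) :
    ∀ m ∈ multSubalgOn F FF S, ∀ x ∈ S, m x ∈ S := by
  intro m hm
  unfold multSubalgOn at hm
  induction hm using NonUnitalAlgebra.adjoin_induction with
  | mem m hm =>
    intro x hx
    rcases hm with ⟨a, ha, rfl⟩ | ⟨a, ha, rfl⟩
    · exact S.mul_mem ha hx
    · exact S.mul_mem hx ha
  | add m n _ _ h1 h2 => exact fun x hx => S.add_mem (h1 x hx) (h2 x hx)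
  | zero => exact fun x hx => S.zero_mem
  | mul m n _ _ h1 h2 => exact fun x hx => h1 _ (h2 x hx)
  | smul r m _ h => exact fun x hx => SMulMemClass.smul_mem r (h x hx)

theorem aux_le (S : NonUnitalSubalgebra F tU) :
    (multSubalgOn F FF S).toSubmodule ≤
        ((MultAlg FF (A := tU)).toSubmodule).restrictScalars F := by
  intro m hm
  change m ∈ MultAlg FF (A := tU)
  change m ∈ multSubalgOn F FF S at hm
  unfold multSubalgOn at hm
  induction hm using NonUnitalAlgebra.adjoin_induction with
  | mem m hm =>
    apply NonUnitalAlgebra.subset_adjoin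
    rcases hm with ⟨a, ha, rfl⟩ | ⟨a, ha, rfl⟩
    · exact Or.inl ⟨a, rfl⟩
    · exact Or.inr ⟨a, rfl⟩
  | add m n _ _ h1 h2 => exact add_mem h1 h2
  | zero => exact zero_mem _
  | mul m n _ _ h1 h2 => exact mul_mem h1 h2
  | smul r m _ h =>
    have : r • m = (algebraMap F FF r) • m := by
      ext x; simp
    rw [this]
    exact SMulMemClass.smul_mem _ h

theorem aux_mulLeft_mem (S : NonUnitalSubalgebra F tU) {a : tU} (ha : a ∈ S) :
    LinearMap.mulLeft FF a ∈ multSubalgOn F FF S :=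
  NonUnitalAlgebra.subset_adjoin F (Or.inl ⟨a, ha, rfl⟩)

theorem aux_mulRight_mem (S : NonUnitalSubalgebra F tU) {a : tU} (ha : a ∈ S) :
    LinearMap.mulRight FF a ∈ multSubalgOn F FF S :=
  NonUnitalAlgebra.subset_adjoin F (Or.inr ⟨a, ha, rfl⟩)

theorem aux_span (S : NonUnitalSubalgebra F tU)
    (hspan : Submodule.span FF (S : Set tU) = ⊤) :
    Submodule.span FF ((multSubalgOn F FF S : Set (Module.End FF tU))) =
        (MultAlg FF (A := tU)).toSubmodule := by
  apply le_antisymm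
  · rw [Submodule.span_le]
    exact fun m hm => aux_le F FF S hm
  · intro m hm
    change m ∈ MultAlg FF (A := tU) at hm
    unfold MultAlg at hm
    induction hm using NonUnitalAlgebra.adjoin_induction with
    | mem m hm =>
      rcases hm with ⟨a, rfl⟩ | ⟨a, rfl⟩
      · have ha : a ∈ Submodule.span FF (S : Set tU) := hspan ▸ Submodule.mem_top
        induction ha using Submodule.span_induction with
        | mem a ha => exact Submodule.subset_span (aux_mulLeft_mem F FF S ha)
        | zero => 
          have : LinearMap.mulLeft FF (0 : tU) = 0 := by ext; simp
          rw [this]; exact zero_mem _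
        | add a b _ _ h1 h2 =>
          have : LinearMap.mulLeft FF (a + b) = LinearMap.mulLeft FF a + LinearMap.mulLeft FF b := by
            ext; simp [add_mul]
          rw [this]; exact add_mem h1 h2
        | smul c a _ h =>
          have : LinearMap.mulLeft FF (c • a) = c • LinearMap.mulLeft FF a := by
            ext; simp [smul_mul_assoc]
          rw [this]; exact Submodule.smul_mem _ _ h
      · have ha : a ∈ Submodule.span FF (S : Set tU) := hspan ▸ Submodule.mem_top
        induction ha using Submodule.span_induction with
        | mem a ha => exact Submodule.subset_span (aux_mulRight_mem F FF S ha)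
        | zero => 
          have : LinearMap.mulRight FF (0 : tU) = 0 := by ext; simp
          rw [this]; exact zero_mem _
        | add a b _ _ h1 h2 =>
          have : LinearMap.mulRight FF (a + b) =
              LinearMap.mulRight FF a + LinearMap.mulRight FF b := by
            ext; simp [mul_add]
          rw [this]; exact add_mem h1 h2
        | smul c a _ h =>
          have : LinearMap.mulRight FF (c • a) = c • LinearMap.mulRight FF a := by
            ext; simp [mul_smul_comm]
          rw [this]; exact Submodule.smul_mem _ _ h
    | add m n _ _ h1 h2 => exact add_mem h1 h2
    | zero => exact zero_mem _
    | smul r m _ h => exact Submodule.smul_mem _ _ h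
    | mul m n hm0 hn0 h1 h2 =>
      clear hm0 hn0
      induction h1 using Submodule.span_induction with
      | zero => rw [zero_mul]; exact zero_mem _
      | add a b _ _ h1 h2 => rw [add_mul]; exact add_mem h1 h2
      | smul c a _ h => rw [smul_mul_assoc]; exact Submodule.smul_mem _ _ h
      | mem m hm =>
        induction h2 using Submodule.span_induction with
        | zero => rw [mul_zero]; exact zero_mem _
        | add a b _ _ h1 h2 => rw [mul_add]; exact add_mem h1 h2
        | smul c a _ h => rw [mul_smul_comm]; exact Submodule.smul_mem _ _ h
        | mem n hn => exact Submodule.subset_span (mul_mem hm hn)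

theorem aux_homog (𝒜 : G → Submodule FF tU) (hgr : IsAlgGrading FF 𝒜)
    (S : NonUnitalSubalgebra F tU)
    (hShomog : S.toSubmodule = ⨆ g, S.toSubmodule ⊓ (𝒜 g).restrictScalars F) :
    (multSubalgOn F FF S).toSubmodule =
        ⨆ h : G, (multSubalgOn F FF S).toSubmodule ⊓ (endGrading FF 𝒜 h).restrictScalars F := by
  apply le_antisymm
  · intro m hm
    change m ∈ NonUnitalAlgebra.adjoin F _ at hm
    induction hm using NonUnitalAlgebra.adjoin_induction with
    | mem m hm =>
      rcases hm with ⟨a, ha, rfl⟩ | ⟨a, ha, rfl⟩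
      · change a ∈ S.toSubmodule at ha
        rw [hShomog] at ha
        refine Submodule.iSup_induction _ (motive := fun a => LinearMap.mulLeft FF a ∈ _) ha
          ?_ ?_ ?_
        · intro g a ha
          refine Submodule.mem_iSup_of_mem g ⟨aux_mulLeft_mem F FF S ha.1, ?_⟩
          exact fun k x hx => hgr.2 g k a ha.2 x hx
        · have : LinearMap.mulLeft FF (0 : tU) = 0 := by ext; simp
          rw [this]; exact zero_mem _
        · intro a b h1 h2
          have : LinearMap.mulLeft FF (a + b) = LinearMap.mulLeft FF a + LinearMap.mulLeft FF b := by
            ext; simp [add_mul]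
          rw [this]; exact add_mem h1 h2
      · change a ∈ S.toSubmodule at ha
        rw [hShomog] at ha
        refine Submodule.iSup_induction _ (motive := fun a => LinearMap.mulRight FF a ∈ _) ha
          ?_ ?_ ?_
        · intro g a ha
          refine Submodule.mem_iSup_of_mem g ⟨aux_mulRight_mem F FF S ha.1, ?_⟩
          intro k x hx
          rw [mul_comm]
          exact hgr.2 k g x hx a ha.2
        · have : LinearMap.mulRight FF (0 : tU) = 0 := by ext; simp
          rw [this]; exact zero_mem _
        · intro a b h1 h2
          have : LinearMap.mulRight FF (a + b) =
              LinearMap.mulRight FF a + LinearMap.mulRight FF b := by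
            ext; simp [mul_add]
          rw [this]; exact add_mem h1 h2
    | add m n _ _ h1 h2 => exact add_mem h1 h2
    | zero => exact zero_mem _
    | smul r m _ h => exact Submodule.smul_mem _ _ h
    | mul m n _ _ h1 h2 =>
      refine Submodule.iSup_induction _ (motive := fun m => m * n ∈ _) h1 ?_ ?_ ?_
      · intro g m hm
        refine Submodule.iSup_induction _ (motive := fun n => m * n ∈ _) h2 ?_ ?_ ?_
        · intro k n hn
          refine Submodule.mem_iSup_of_mem (g * k) ⟨mul_mem (S := NonUnitalSubalgebra F _)
            (s := multSubalgOn F FF S) hm.1 hn.1, ?_⟩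
          intro l x hx
          rw [mul_assoc]
          exact hm.2 _ _ (hn.2 _ _ hx)
        · rw [mul_zero]; exact zero_mem _
        · intro a b h1 h2
          rw [mul_add]; exact add_mem h1 h2
      · rw [zero_mul]; exact zero_mem _
      · intro a b h1 h2
        rw [add_mul]; exact add_mem h1 h2
  · exact iSup_le fun h => inf_le_left

theorem aux_comp_span (𝒜 : G → Submodule FF tU) (hgr : IsAlgGrading FF 𝒜)
    (S : NonUnitalSubalgebra F tU)
    (hShomog : S.toSubmodule = ⨆ g, S.toSubmodule ⊓ (𝒜 g).restrictScalars F)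
    (hspan : Submodule.span FF (S : Set tU) = ⊤) (g : G) (x : tU) (hx : x ∈ 𝒜 g) :
    x ∈ Submodule.span FF ((S : Set tU) ∩ 𝒜 g) := by
  let P : tU →ₗ[FF] tU := (𝒜 g).subtype ∘ₗ DirectSum.component FF G (fun i => 𝒜 i) g ∘ₗ
    (LinearEquiv.ofBijective (DirectSum.coeLinearMap 𝒜) hgr.1).symm.toLinearMap
  have hP1 : ∀ y ∈ 𝒜 g, P y = y := by
    intro y hy
    have := hgr.1.ofBijective_coeLinearMap_of_mem hy
    exact congrArg Subtype.val this
  have hP2 : ∀ k, k ≠ g → ∀ y ∈ 𝒜 k, P y = 0 := by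
    intro k hk y hy
    have := hgr.1.ofBijective_coeLinearMap_of_mem_ne hk hy
    exact congrArg Subtype.val this
  have key : ∀ y : tU, P y ∈ Submodule.span FF ((S : Set tU) ∩ 𝒜 g) := by
    intro y
    have hy : y ∈ Submodule.span FF (S : Set tU) := hspan ▸ Submodule.mem_top
    induction hy using Submodule.span_induction with
    | zero => rw [map_zero]; exact zero_mem _
    | add a b _ _ h1 h2 => rw [map_add]; exact add_mem h1 h2
    | smul c a _ h => rw [map_smul]; exact Submodule.smul_mem _ _ h
    | mem a ha =>
      change a ∈ S.toSubmodule at ha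
      rw [hShomog] at ha
      refine Submodule.iSup_induction _ (motive := fun a => P a ∈ _) ha ?_ ?_ ?_
      · intro k a ha
        by_cases hk : k = g
        · subst hk
          rw [hP1 a ha.2]
          exact Submodule.subset_span ha
        · rw [hP2 k hk a ha.2]; exact zero_mem _
      · rw [map_zero]; exact zero_mem _
      · intro a b h1 h2
        rw [map_add]; exact add_mem h1 h2
  rw [← hP1 x hx]
  exact key x

open Classical in
/-- restriction to `S` -/
def auxPsi (S : NonUnitalSubalgebra F tU) (m : Module.End FF tU) : Module.End F ↥S :=
  if h : ∀ x ∈ S, m x ∈ S then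
    { toFun := fun x => ⟨m x, h x x.2⟩
      map_add' := fun x y => Subtype.ext (by simp)
      map_smul' := fun c x => Subtype.ext (by
        have : m (c • (x : tU)) = c • m x := by
          rw [← algebraMap_smul FF c (x : tU), map_smul, algebraMap_smul]
        simpa using this) }
  else 0

theorem auxPsi_apply (S : NonUnitalSubalgebra F tU) (m : Module.End FF tU)
    (hm : m ∈ multSubalgOn F FF S) (x : S) : (auxPsi F FF S m x : tU) = m x := by
  unfold auxPsi
  rw [dif_pos (aux_maps F FF S m hm)]
  rfl

/-- Let `F ⊆ FF` be a field extension, `Ũ` a `G`-graded `FF`-algebra (`G` abelian), `U = S` a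
homogeneous `F`-subalgebra of `Ũ` with `FF·U = Ũ`, and `M` the `F`-subalgebra of `M(Ũ)` generated
by left and right multiplications by elements of `U`.  Then `M` is a homogeneous subalgebra of
`M(Ũ)` with `FF·M = M(Ũ)`, and restriction to `U` gives an isomorphism of `G`-graded `F`-algebras
`ψ : M → M(U)`. -/
theorem mult_subalgebra_restriction_iso
    (𝒜 : G → Submodule FF tU) (hgr : IsAlgGrading FF 𝒜)
    (S : NonUnitalSubalgebra F tU)
    (hShomog : S.toSubmodule = ⨆ g, S.toSubmodule ⊓ (𝒜 g).restrictScalars F)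
    (hspan : Submodule.span FF (S : Set tU) = ⊤) :
    -- `M` is a homogeneous subalgebra of `M(Ũ)`
    ((multSubalgOn F FF S).toSubmodule ≤
        ((MultAlg FF (A := tU)).toSubmodule).restrictScalars F) ∧
    ((multSubalgOn F FF S).toSubmodule =
        ⨆ h : G, (multSubalgOn F FF S).toSubmodule ⊓ (endGrading FF 𝒜 h).restrictScalars F) ∧
    -- `FF·M = M(Ũ)`
    (Submodule.span FF ((multSubalgOn F FF S : Set (Module.End FF tU))) =
        (MultAlg FF (A := tU)).toSubmodule) ∧
    -- every `m ∈ M` maps `U` into `U`, and restriction is an isomorphism of graded `F`-algebras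
    -- `ψ : M → M(U)`
    (∀ m ∈ multSubalgOn F FF S, ∀ x ∈ S, m x ∈ S) ∧
    (∃ ψ : Module.End FF tU → Module.End F ↥S,
      -- `ψ` is restriction to `U`
      (∀ m ∈ multSubalgOn F FF S, ∀ x : ↥S, ((ψ m) x : tU) = m (x : tU)) ∧
      -- `ψ` is injective on `M`, additive and multiplicative
      Set.InjOn ψ (multSubalgOn F FF S) ∧
      (∀ m ∈ multSubalgOn F FF S, ∀ m' ∈ multSubalgOn F FF S,
          ψ (m + m') = ψ m + ψ m' ∧ ψ (m * m') = ψ m * ψ m' ∧ ∀ c : F, ψ (c • m) = c • ψ m) ∧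
      -- `ψ` maps `M` onto `M(U)`
      (ψ '' (multSubalgOn F FF S) = (MultAlg F (A := ↥S) : Set (Module.End F ↥S))) ∧
      -- `ψ` respects the gradings
      (∀ h : G,
        ψ '' ((multSubalgOn F FF S : Set (Module.End FF tU)) ∩
            ((endGrading FF 𝒜 h : Submodule FF (Module.End FF tU)) : Set (Module.End FF tU))) =
          (MultAlg F (A := ↥S) : Set (Module.End F ↥S)) ∩
            {φ : Module.End F ↥S | ∀ g : G, ∀ x : ↥S, (x : tU) ∈ 𝒜 g →
              ((φ x : tU) ∈ 𝒜 (h * g))})) := by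
  refine ⟨aux_le F FF S, aux_homog F FF 𝒜 hgr S hShomog, aux_span F FF S hspan,
    aux_maps F FF S, auxPsi F FF S, auxPsi_apply F FF S, ?_, ?_⟩
  · intro m hm m' hm' h
    apply LinearMap.ext_on hspan
    intro x hx
    have := congrArg (fun φ : Module.End F S => (φ ⟨x, hx⟩ : tU)) h
    simpa only [auxPsi_apply F FF S m hm, auxPsi_apply F FF S m' hm'] using this
  have hadd : ∀ m ∈ multSubalgOn F FF S, ∀ m' ∈ multSubalgOn F FF S,
      auxPsi F FF S (m + m') = auxPsi F FF S m + auxPsi F FF S m' := by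
    intro m hm m' hm'
    refine LinearMap.ext fun x => Subtype.ext ?_
    rw [auxPsi_apply F FF S _ (add_mem hm hm')]
    simp [auxPsi_apply F FF S m hm, auxPsi_apply F FF S m' hm']
  have hmul : ∀ m ∈ multSubalgOn F FF S, ∀ m' ∈ multSubalgOn F FF S,
      auxPsi F FF S (m * m') = auxPsi F FF S m * auxPsi F FF S m' := by
    intro m hm m' hm'
    refine LinearMap.ext fun x => Subtype.ext ?_
    rw [auxPsi_apply F FF S _ (mul_mem hm hm')]
    simp [auxPsi_apply F FF S m hm, auxPsi_apply F FF S m' hm']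
  have hsmul : ∀ m ∈ multSubalgOn F FF S, ∀ c : F,
      auxPsi F FF S (c • m) = c • auxPsi F FF S m := by
    intro m hm c
    refine LinearMap.ext fun x => Subtype.ext ?_
    rw [auxPsi_apply F FF S _ (SMulMemClass.smul_mem c hm)]
    simp [auxPsi_apply F FF S m hm]
  have hzero : auxPsi F FF S 0 = 0 := by
    refine LinearMap.ext fun x => Subtype.ext ?_
    rw [auxPsi_apply F FF S _ (zero_mem _)]
    simp
  have hL : ∀ a : S, auxPsi F FF S (LinearMap.mulLeft FF (a : tU)) = LinearMap.mulLeft F a := by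
    intro a
    refine LinearMap.ext fun x => Subtype.ext ?_
    rw [auxPsi_apply F FF S _ (aux_mulLeft_mem F FF S a.2)]
    simp
  have hR : ∀ a : S, auxPsi F FF S (LinearMap.mulRight FF (a : tU)) = LinearMap.mulRight F a := by
    intro a
    refine LinearMap.ext fun x => Subtype.ext ?_
    rw [auxPsi_apply F FF S _ (aux_mulRight_mem F FF S a.2)]
    simp
  have hto : ∀ m ∈ multSubalgOn F FF S, auxPsi F FF S m ∈ MultAlg F (A := ↥S) := by
    intro m hm
    change m ∈ NonUnitalAlgebra.adjoin F _ at hm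
    induction hm using NonUnitalAlgebra.adjoin_induction with
    | mem m hm =>
      apply NonUnitalAlgebra.subset_adjoin
      rcases hm with ⟨a, ha, rfl⟩ | ⟨a, ha, rfl⟩
      · exact Or.inl ⟨⟨a, ha⟩, (hL ⟨a, ha⟩).symm⟩
      · exact Or.inr ⟨⟨a, ha⟩, (hR ⟨a, ha⟩).symm⟩
    | add m n hm hn h1 h2 => rw [hadd m hm n hn]; exact add_mem h1 h2
    | zero => rw [hzero]; exact zero_mem _
    | mul m n hm hn h1 h2 => rw [hmul m hm n hn]; exact mul_mem h1 h2
    | smul r m hm h => rw [hsmul m hm]; exact SMulMemClass.smul_mem r h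
  have hsurj : ∀ φ ∈ MultAlg F (A := ↥S), ∃ m ∈ multSubalgOn F FF S, auxPsi F FF S m = φ := by
    intro φ hφ
    unfold MultAlg at hφ
    induction hφ using NonUnitalAlgebra.adjoin_induction with
    | mem m hm =>
      rcases hm with ⟨a, rfl⟩ | ⟨a, rfl⟩
      · exact ⟨_, aux_mulLeft_mem F FF S a.2, hL a⟩
      · exact ⟨_, aux_mulRight_mem F FF S a.2, hR a⟩
    | add _ _ _ _ h1 h2 =>
      obtain ⟨m, hm, rfl⟩ := h1
      obtain ⟨n, hn, rfl⟩ := h2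
      exact ⟨_, add_mem hm hn, hadd m hm n hn⟩
    | zero => exact ⟨0, zero_mem _, hzero⟩
    | mul _ _ _ _ h1 h2 =>
      obtain ⟨m, hm, rfl⟩ := h1
      obtain ⟨n, hn, rfl⟩ := h2
      exact ⟨_, mul_mem hm hn, hmul m hm n hn⟩
    | smul r _ _ h =>
      obtain ⟨m, hm, rfl⟩ := h
      exact ⟨_, SMulMemClass.smul_mem r hm, hsmul m hm r⟩
  refine ⟨fun m hm m' hm' => ⟨hadd m hm m' hm', hmul m hm m' hm', hsmul m hm⟩, ?_, ?_⟩
  · ext φ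
    constructor
    · rintro ⟨m, hm, rfl⟩
      exact hto m hm
    · exact hsurj φ
  · intro h
    ext φ
    constructor
    · rintro ⟨m, ⟨hm, hmh⟩, rfl⟩
      refine ⟨hto m hm, fun g x hx => ?_⟩
      rw [auxPsi_apply F FF S m hm]
      exact hmh g x hx
    · rintro ⟨hφ, hφh⟩
      obtain ⟨m, hm, rfl⟩ := hsurj φ hφ
      refine ⟨m, ⟨hm, fun g x hx => ?_⟩, rfl⟩
      have hx' := aux_comp_span F FF 𝒜 hgr S hShomog hspan g x hx
      clear hx
      induction hx' using Submodule.span_induction with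
      | zero => rw [map_zero]; exact zero_mem _
      | add a b _ _ h1 h2 => rw [map_add]; exact add_mem h1 h2
      | smul c a _ h => rw [map_smul]; exact Submodule.smul_mem _ _ h
      | mem a ha =>
        have := hφh g ⟨a, ha.1⟩ ha.2
        rwa [auxPsi_apply F FF S m hm] at this

end
end
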